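/- Let G be a discrete group such that every finitely generated subgroup H ≤ G is residually finite and has a subnormal series {1} = H₀ ⊴ H₁ ⊴ ⋯ ⊴ Hₙ = H in which each quotient H_{i+1}/H_i is locally virtually abelian (every finitely generated subgroup of H_{i+1}/H_i has an abelian subgroup of finite index). Let (G, X, 0) be an expansive 0-gluing pointed dynamical system whose homoclinic points are dense in X. Then every asymptotically nilpotent endomorphism f : X → X of (G, X, 0) is nilpotent. -/

import Mathlib

/-- A group is virtually abelian if it has an abelian subgroup of finite index. -/
def VirtuallyAbelian (H : Type) [Group H] : Prop :=
  ∃ A : Subgroup H, A.FiniteIndex ∧ ∀ x y : A, x * y = y * x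

/-- A group is locally virtually abelian if each of its finitely generated subgroups
is virtually abelian. -/
def LocallyVirtuallyAbelian (H : Type) [Group H] : Prop :=
  ∀ K : Subgroup H, K.FG → VirtuallyAbelian K

/-- A group is residually finite if every nontrivial element survives in some finite
quotient. -/
def ResiduallyFinite (H : Type) [Group H] : Prop :=
  ∀ g : H, g ≠ 1 → ∃ (Q : Type) (_ : Group Q) (φ : H →* Q), Finite Q ∧ φ g ≠ 1

/-- `H` has a subnormal series `{1} = H₀ ⊴ H₁ ⊴ ⋯ ⊴ Hₙ = H` in which every quotient
`H_{i+1}/H_i` is locally virtually abelian. -/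
def HasLVASubnormalSeries (H : Type) [Group H] : Prop :=
  ∃ (n : ℕ) (c : Fin (n + 1) → Subgroup H),
    c 0 = ⊥ ∧ c (Fin.last n) = ⊤ ∧
    ∀ i : Fin n, c i.castSucc ≤ c i.succ ∧
      ∃ _ : ((c i.castSucc).subgroupOf (c i.succ)).Normal,
        LocallyVirtuallyAbelian
          (↥(c i.succ) ⧸ (c i.castSucc).subgroupOf (c i.succ))

/-- A point `x` is homoclinic: `g • x` is eventually close to `x₀` outside finite
subsets of `G`. -/
def Homoclinic (G : Type) [Group G] {X : Type} [MetricSpace X] [MulAction G X]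
    (x₀ x : X) : Prop :=
  ∀ ε : ℝ, 0 < ε → ∃ E : Finset G, ∀ g : G, g ∉ E → dist (g • x) x₀ < ε

/-- The `0`-gluing property of a pointed dynamical system. -/
def ZeroGluing (G : Type) [Group G] {X : Type} [MetricSpace X] [MulAction G X]
    (x₀ : X) : Prop :=
  ∀ ε : ℝ, 0 < ε → ∃ δ : ℝ, 0 < δ ∧ ∃ E : Finset G,
    ∀ (I : Type) (A : I → Set G) (p : I → X),
      (∀ g : G, ∃! i : I, g ∈ A i) →
      (∀ i : I, ∀ g ∈ A i, (∃ e ∈ E, e * g ∉ A i) → dist (g • p i) x₀ < δ) →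
      ∃ y : X, ∀ i : I, ∀ g ∈ A i, dist (g • y) (g • p i) < ε

/-!
A homoclinic point `x` has finite support, the support being the set of times at which the orbit
is visibly away from `x₀`. Suppose every point of finite support is killed by some iterate of
`f`. The Baire category theorem and gluing then yield a finite set `W` and a number `N` such that
the orbit of `fⁿ z` is near `x₀` at time `1` whenever `n ≥ N` and `z` is near `x₀` on `W`; this
holds first for the dense set of points of finite support, then for all `z` by continuity. By
compactness, each orbit under `f` has come near `x₀` on `W` after boundedly many steps, at all
times in `G`, so `f` is nilpotent.

That a point `x` of finite support dies is proved by bounding the supports of its iterates.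
Consider, for a subgroup `K`, the sums of translates of `x` over separated subsets of `K`, and
ask that the supports of all their iterates lie in finitely many cosets of `K`. This holds for
the group generated by the support of `x` and the speed of propagation of `f`. It passes from `K`
to all subgroups above some finitely generated one, to subgroups of finite index, and, by the
main argument, to normal subgroups `K₁` with `K / K₁` infinite cyclic; hence it descends along
the subnormal series to the trivial group, where it bounds the supports and asymptotic nilpotence
kills `x`.

In the main argument, residual finiteness replaces a finite sum by a sum over the periods `L = K₁
∩ N`, with `N` of finite index, which agrees with it on a prescribed finite set. Modulo `L` its
iterates live on finitely many strips in the direction of some `s`. Baire's theorem provides far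
away summands around which all late iterates vanish; cutting there leaves an `L`-periodic point
supported on finitely many cosets of `L`, which dies. By comparison the iterates of the original
sum do not spread along `s`, so that it dies as well, and this limits how far the supports can
move away from `K₁`.
-/

section Groups

open scoped Pointwise

variable {Γ Γ' : Type*} [Group Γ] [Group Γ']

theorem relIndex_ne_zero_iff_exists_finite_subset_mul {K₁ K : Subgroup Γ} :
    K₁.relIndex K ≠ 0 ↔ ∃ R : Set Γ, R.Finite ∧ (K : Set Γ) ⊆ R * K₁ := by
  refine ⟨fun h => ?_, ?_⟩
  · have : Finite (K ⧸ K₁.subgroupOf K) := Nat.finite_of_card_ne_zero h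
    let rep (k : K) : K := (k : K ⧸ K₁.subgroupOf K).out
    refine ⟨Set.range fun c : K ⧸ K₁.subgroupOf K => (c.out : Γ), Set.finite_range _,
      fun k hk => ⟨rep ⟨k, hk⟩, ⟨_, rfl⟩, (rep ⟨k, hk⟩ : Γ)⁻¹ * k, ?_, by simp⟩⟩
    simpa [Subgroup.mem_subgroupOf] using
      QuotientGroup.eq.1 (QuotientGroup.out_eq' ((⟨k, hk⟩ : K) : K ⧸ K₁.subgroupOf K))
  · rintro ⟨R, hR, hKR⟩
    have := hR.to_subtype
    have hrep (k : K) : ∃ r : R, (r : Γ)⁻¹ * k ∈ K₁ := by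
      obtain ⟨r, hr, l, hl, hrl⟩ := hKR k.2
      exact ⟨⟨r, hr⟩, by simpa [← hrl] using hl⟩
    choose rep hrep using hrep
    have hinj : Function.Injective fun c : K ⧸ K₁.subgroupOf K => rep c.out := by
      intro c c' hcc'
      rw [← c.out_eq', ← c'.out_eq', QuotientGroup.eq, Subgroup.mem_subgroupOf]
      have := mul_mem (inv_mem (hrep c.out)) (hrep c'.out)
      simp only [show rep c.out = rep c'.out from hcc'] at this
      simpa using this
    have := Finite.of_injective _ hinj
    exact Nat.card_ne_zero.2 ⟨inferInstance, this⟩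

theorem fg_map {K : Subgroup Γ} (hK : K.FG) (φ : Γ →* Γ') : (K.map φ).FG := by
  rw [Subgroup.fg_iff_submonoid_fg] at hK ⊢
  exact hK.map φ

/-- `t` normalizes `L` and has infinite order modulo `L`. -/
structure FreelyNormalizes (t : Γ) (L : Subgroup Γ) : Prop where
  mem_normalizer : t ∈ Subgroup.normalizer (L : Set Γ)
  eq_zero_of_zpow_mem : ∀ i : ℤ, t ^ i ∈ L → i = 0

theorem exists_zpow_mul_of_mem_zpowers_sup {t : Γ} {L : Subgroup Γ}
    (ht : t ∈ Subgroup.normalizer (L : Set Γ)) {g : Γ} (hg : g ∈ Subgroup.zpowers t ⊔ L) :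
    ∃ i : ℤ, ∃ l ∈ L, t ^ i * l = g := by
  rw [← SetLike.mem_coe, Subgroup.coe_mul_of_left_le_normalizer_right _ _
    (Subgroup.zpowers_le.2 ht)] at hg
  obtain ⟨_, ⟨i, rfl⟩, l, hl, rfl⟩ := hg
  exact ⟨i, l, hl, rfl⟩

theorem FreelyNormalizes.map {i : Γ' →* Γ} (hi : Function.Injective i) {t : Γ'}
    {L : Subgroup Γ'} (h : FreelyNormalizes t L) : FreelyNormalizes (i t) (L.map i) where
  mem_normalizer := Subgroup.le_normalizer_map i (Subgroup.mem_map_of_mem i h.mem_normalizer)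
  eq_zero_of_zpow_mem j hj := h.eq_zero_of_zpow_mem j <| by
    rwa [← map_zpow, Subgroup.mem_map_iff_mem hi] at hj

theorem FreelyNormalizes.comap {q : Γ →* Γ'} (hq : Function.Surjective q) {t : Γ}
    {L : Subgroup Γ'} (h : FreelyNormalizes (q t) L) : FreelyNormalizes t (L.comap q) where
  mem_normalizer := by
    rw [Subgroup.coe_comap]
    have := Subgroup.comap_normalizer_eq_of_surjective L hq
    exact this ▸ h.mem_normalizer
  eq_zero_of_zpow_mem j hj := h.eq_zero_of_zpow_mem j <| by
    rwa [Subgroup.mem_comap, map_zpow] at hj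

/-- A property of subgroups that passes to all intermediate groups above some finitely generated
subgroup, to subgroups of finite index, and to normal subgroups with infinite cyclic quotient.
Such a property descends along subnormal series with locally virtually abelian quotients, see
`IsDescending.bot_of_hasLVASubnormalSeries`. -/
structure IsDescending (Φ : Subgroup Γ → Prop) : Prop where
  exists_fg : ∀ {K}, Φ K → ∃ N : Subgroup Γ, N.FG ∧ N ≤ K ∧ ∀ M, N ≤ M → M ≤ K → Φ M
  of_relIndex_ne_zero : ∀ {K K₁}, Φ K → K₁ ≤ K → K₁.relIndex K ≠ 0 → Φ K₁
  of_freelyNormalizes : ∀ {t K₁}, FreelyNormalizes t K₁ → Φ (Subgroup.zpowers t ⊔ K₁) → Φ K₁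

namespace IsDescending

variable {Φ : Subgroup Γ → Prop}

theorem of_mem_normalizer (hΦ : IsDescending Φ) {t : Γ} {K₁ : Subgroup Γ}
    (ht : t ∈ Subgroup.normalizer (K₁ : Set Γ)) (h : Φ (Subgroup.zpowers t ⊔ K₁)) : Φ K₁ := by
  by_cases hfree : ∀ i : ℤ, t ^ i ∈ K₁ → i = 0
  · exact hΦ.of_freelyNormalizes ⟨ht, hfree⟩ h
  push Not at hfree
  obtain ⟨i, hi, hi0⟩ := hfree
  refine hΦ.of_relIndex_ne_zero h le_sup_right ?_
  rw [relIndex_ne_zero_iff_exists_finite_subset_mul]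
  refine ⟨(t ^ · : ℤ → Γ) '' Set.Ico 0 |i|, (Set.finite_Ico _ _).image _, fun g hg => ?_⟩
  obtain ⟨j, l, hl, rfl⟩ := exists_zpow_mul_of_mem_zpowers_sup ht hg
  refine ⟨t ^ (j % i), ⟨j % i, ⟨Int.emod_nonneg _ hi0, Int.emod_lt_abs _ hi0⟩, rfl⟩,
    (t ^ i) ^ (j / i) * l, mul_mem (zpow_mem hi _) hl, ?_⟩
  simp only
  rw [← mul_assoc, ← zpow_mul, ← zpow_add, Int.emod_add_mul_ediv]

theorem of_commutator_le (hΦ : IsDescending Φ) {T : Set Γ} (hT : T.Finite) {K₁ : Subgroup Γ}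
    (hcomm : ⁅Subgroup.closure T ⊔ K₁, Subgroup.closure T ⊔ K₁⁆ ≤ K₁)
    (h : Φ (Subgroup.closure T ⊔ K₁)) : Φ K₁ := by
  induction T, hT using Set.Finite.induction_on generalizing K₁ with
  | empty => simpa using h
  | @insert t T _ _ ih =>
    have hsplit : Subgroup.closure (insert t T) ⊔ K₁ =
        Subgroup.closure T ⊔ (Subgroup.zpowers t ⊔ K₁) := by
      rw [← Set.singleton_union, Subgroup.closure_union, ← Subgroup.zpowers_eq_closure]
      ac_rfl
    rw [hsplit] at hcomm h
    have hle : Subgroup.zpowers t ⊔ K₁ ≤ Subgroup.closure T ⊔ (Subgroup.zpowers t ⊔ K₁) :=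
      le_sup_right
    refine hΦ.of_mem_normalizer (t := t) ?_ (ih (hcomm.trans le_sup_right) h)
    refine Subgroup.le_normalizer_iff_commutator_le_right.2 ?_
      (hle (Subgroup.mem_sup_left (Subgroup.mem_zpowers t)))
    exact (Subgroup.commutator_mono le_rfl (le_sup_right.trans hle)).trans hcomm

theorem map (hΦ : IsDescending Φ) {i : Γ' →* Γ} (hi : Function.Injective i) :
    IsDescending fun K => Φ (K.map i) where
  exists_fg {K} hK := by
    obtain ⟨N, hN, hNK, h⟩ := hΦ.exists_fg hK
    have hmap : (N.comap i).map i = N :=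
      Subgroup.map_comap_eq_self (hNK.trans (Subgroup.map_le_range i K))
    refine ⟨N.comap i, ?_, ?_, fun M hNM hMK => h _ ?_ (Subgroup.map_mono hMK)⟩
    · rw [← hmap, Subgroup.fg_iff_submonoid_fg] at hN
      exact (Subgroup.fg_iff_submonoid_fg _).2 (Submonoid.FG.map_injective i hi hN)
    · rwa [← Subgroup.map_le_map_iff_of_injective hi, hmap]
    · exact hmap ▸ Subgroup.map_mono hNM
  of_relIndex_ne_zero hK hle hindex :=
    hΦ.of_relIndex_ne_zero hK (Subgroup.map_mono hle) <| by
      rwa [Subgroup.relIndex_map_map_of_injective _ _ hi]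
  of_freelyNormalizes ht hK := hΦ.of_freelyNormalizes (ht.map hi) <| by
    rwa [← MonoidHom.map_zpowers, ← Subgroup.map_sup]

theorem comap (hΦ : IsDescending Φ) {q : Γ →* Γ'} (hq : Function.Surjective q) :
    IsDescending fun K => Φ (K.comap q) where
  exists_fg {K} hK := by
    obtain ⟨N, hN, hNK, h⟩ := hΦ.exists_fg hK
    exact ⟨N.map q, fg_map hN q, Subgroup.map_le_iff_le_comap.2 hNK, fun M hNM hMK =>
      h _ (Subgroup.map_le_iff_le_comap.1 hNM) (Subgroup.comap_mono hMK)⟩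
  of_relIndex_ne_zero hK hle hindex :=
    hΦ.of_relIndex_ne_zero hK (Subgroup.comap_mono hle) <| by
      rwa [Subgroup.relIndex_comap, Subgroup.map_comap_eq_self_of_surjective hq]
  of_freelyNormalizes {t K₁} ht hK := by
    obtain ⟨t, rfl⟩ := hq t
    refine hΦ.of_freelyNormalizes (ht.comap hq) ?_
    have hker : q.ker ≤ K₁.comap q := fun g hg => by
      simp [Subgroup.mem_comap, MonoidHom.mem_ker.1 hg]
    rwa [← MonoidHom.map_zpowers, ← Subgroup.comap_sup_eq q _ _ hq, Subgroup.comap_map_eq,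
      sup_assoc, sup_eq_right.2 hker] at hK

end IsDescending

end Groups

section LocallyVirtuallyAbelian

variable {Γ : Type} [Group Γ] {Φ : Subgroup Γ → Prop}

theorem IsDescending.bot_of_locallyVirtuallyAbelian (hΦ : IsDescending Φ)
    (hΓ : LocallyVirtuallyAbelian Γ) (h : Φ ⊤) : Φ ⊥ := by
  obtain ⟨N, hN, -, hNM⟩ := hΦ.exists_fg h
  obtain ⟨A, hA, hcomm⟩ := hΓ N hN
  have : Group.FG N := (Group.fg_iff_subgroup_fg N).2 hN
  have hAfg : A.FG := (Group.fg_iff_subgroup_fg A).1 A.fg_of_index_ne_zero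
  obtain ⟨T, hTA, hT⟩ := (Subgroup.fg_iff _).1 (fg_map hAfg N.subtype)
  have hAN : Φ (A.map N.subtype) := by
    refine hΦ.of_relIndex_ne_zero (hNM N le_rfl le_top) (Subgroup.map_subtype_le A) ?_
    rw [Subgroup.relIndex, Subgroup.subgroupOf,
      Subgroup.comap_map_eq_self_of_injective N.subtype_injective]
    exact hA.index_ne_zero
  refine hΦ.of_commutator_le hT ?_ (by rwa [sup_bot_eq, hTA])
  rw [sup_bot_eq, hTA, ← Subgroup.map_commutator]
  refine (Subgroup.map_mono (Subgroup.commutator_le.2 fun a ha b hb => ?_)).trans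
    (Subgroup.map_bot N.subtype).le
  rw [Subgroup.mem_bot, commutatorElement_eq_one_iff_mul_comm]
  exact congrArg Subtype.val (hcomm ⟨a, ha⟩ ⟨b, hb⟩)

theorem IsDescending.bot_of_hasLVASubnormalSeries (hΦ : IsDescending Φ)
    (hΓ : HasLVASubnormalSeries Γ) (h : Φ ⊤) : Φ ⊥ := by
  obtain ⟨n, c, hbot, htop, hc⟩ := hΓ
  suffices ∀ i, Φ (c i) from hbot ▸ this 0
  intro i
  induction i using Fin.reverseInduction with
  | last => rwa [htop]
  | cast i ih =>
    obtain ⟨hle, _, hquot⟩ := hc i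
    have := ((hΦ.map (c i.succ).subtype_injective).comap
      (QuotientGroup.mk'_surjective _)).bot_of_locallyVirtuallyAbelian hquot
    simp only [Subgroup.comap_top, ← MonoidHom.range_eq_map, Subgroup.range_subtype,
      MonoidHom.comap_bot, QuotientGroup.ker_mk', Subgroup.subgroupOf_map_subtype,
      inf_eq_left.2 hle] at this
    exact this ih

theorem ResiduallyFinite.exists_normal_finiteIndex (hΓ : ResiduallyFinite Γ) {A : Set Γ}
    (hA : A.Finite) :
    ∃ N : Subgroup Γ, N.Normal ∧ N.FiniteIndex ∧ ∀ a ∈ A, a ∈ N → a = 1 := by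
  induction A, hA using Set.Finite.induction_on with
  | empty => exact ⟨⊤, inferInstance, inferInstance, by simp⟩
  | @insert b A _ _ ih =>
    obtain ⟨N, hnormal, hindex, hN⟩ := ih
    by_cases hb : b = 1
    · exact ⟨N, hnormal, hindex, by simpa [hb] using hN⟩
    · obtain ⟨Q, _, φ, _, hφ⟩ := hΓ b hb
      refine ⟨N ⊓ φ.ker, inferInstance, inferInstance, ?_⟩
      rintro a (rfl | ha) haN
      · exact absurd haN.2 hφ
      · exact hN a ha haN.1

end LocallyVirtuallyAbelian

section ResiduallyFiniteIn

/-- Residual finiteness of a subgroup `K` of `G`, expressed by subgroups of `G`: finitely many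
nontrivial elements can be avoided by a subgroup that `K` normalizes and meets in finite index. -/
def ResiduallyFiniteIn {G : Type*} [Group G] (K : Subgroup G) : Prop :=
  ∀ A : Set G, A.Finite → ∃ N : Subgroup G, K ≤ Subgroup.normalizer (N : Set G) ∧
    N.relIndex K ≠ 0 ∧ ∀ a ∈ A, a ∈ N → a = 1

theorem ResiduallyFiniteIn.mono {G : Type*} [Group G] {K K' : Subgroup G}
    (h : ResiduallyFiniteIn K) (hle : K' ≤ K) : ResiduallyFiniteIn K' := fun A hA => by
  obtain ⟨N, hnorm, hindex, hN⟩ := h A hA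
  refine ⟨N, hle.trans hnorm, fun h0 => hindex ?_, hN⟩
  exact Subgroup.relIndex_eq_zero_of_le_right hle h0

theorem ResiduallyFinite.residuallyFiniteIn {G : Type} [Group G] {H : Subgroup G}
    (h : ResiduallyFinite H) : ResiduallyFiniteIn H := by
  intro A hA
  obtain ⟨N, hnormal, hindex, hN⟩ := h.exists_normal_finiteIndex
    (hA.preimage (f := ((↑) : H → G)) Subtype.val_injective.injOn)
  have hcomap : (N.map H.subtype).subgroupOf H = N :=
    Subgroup.comap_map_eq_self_of_injective H.subtype_injective N
  refine ⟨N.map H.subtype, ?_, ?_, ?_⟩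
  · rw [← Subgroup.normal_subgroupOf_iff_le_normalizer (Subgroup.map_subtype_le N), hcomap]
    exact hnormal
  · rw [Subgroup.relIndex, hcomap]
    exact hindex.index_ne_zero
  · rintro _ ha ⟨a, haN, rfl⟩
    simp [hN a ha haN]

end ResiduallyFiniteIn

section CosetSlab

open scoped Pointwise

variable {G : Type*} [Group G] {L : Subgroup G} {s : G}

/-- The union of the left cosets `c * s ^ j * L` of `L` with `c ∈ C` and `j ∈ J`. When `s` freely
normalizes `L`, the exponent `j` measures the position of a coset in the direction of `s`. -/
def cosetSlab (C : Set G) (s : G) (L : Subgroup G) (J : Set ℤ) : Set G :=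
  C * (fun j : ℤ => s ^ j) '' J * L

theorem mem_cosetSlab {C : Set G} {J : Set ℤ} {g : G} :
    g ∈ cosetSlab C s L J ↔ ∃ c ∈ C, ∃ j ∈ J, ∃ l ∈ L, c * s ^ j * l = g := by
  simp only [cosetSlab, Set.mem_mul, Set.mem_image, SetLike.mem_coe]
  constructor
  · rintro ⟨_, ⟨c, hc, _, ⟨j, hj, rfl⟩, rfl⟩, l, hl, rfl⟩
    exact ⟨c, hc, j, hj, l, hl, rfl⟩
  · rintro ⟨c, hc, j, hj, l, hl, rfl⟩
    exact ⟨_, ⟨c, hc, _, ⟨j, hj, rfl⟩, rfl⟩, l, hl, rfl⟩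

theorem mem_cosetSlab_iff_exists_singleton {C : Set G} {J : Set ℤ} {g : G} :
    g ∈ cosetSlab C s L J ↔ ∃ j ∈ J, g ∈ cosetSlab C s L {j} := by
  simp only [mem_cosetSlab, Set.mem_singleton_iff, exists_eq_left]
  exact ⟨fun ⟨c, hc, j, hj, h⟩ => ⟨j, hj, c, hc, h⟩, fun ⟨j, hj, c, hc, h⟩ => ⟨c, hc, j, hj, h⟩⟩

theorem cosetSlab_mono {C C' : Set G} {J J' : Set ℤ} (hC : C ⊆ C') (hJ : J ⊆ J') :
    cosetSlab C s L J ⊆ cosetSlab C' s L J' :=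
  Set.mul_subset_mul_right (Set.mul_subset_mul hC (Set.image_mono hJ))

theorem mul_cosetSlab (A C : Set G) (J : Set ℤ) :
    A * cosetSlab C s L J = cosetSlab (A * C) s L J := by
  simp only [cosetSlab, mul_assoc]

theorem cosetSlab_zero (C : Set G) : cosetSlab C s L {0} = C * L := by
  simp [cosetSlab]

theorem mul_right_preimage_cosetSlab (C : Set G) (J : Set ℤ) {l : G} (hl : l ∈ L) :
    (· * l) ⁻¹' cosetSlab C s L J = cosetSlab C s L J := by
  ext g
  simp only [Set.mem_preimage, mem_cosetSlab]
  constructor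
  · rintro ⟨c, hc, j, hj, l', hl', h⟩
    exact ⟨c, hc, j, hj, l' * l⁻¹, mul_mem hl' (inv_mem hl), by rw [← mul_assoc, h]; group⟩
  · rintro ⟨c, hc, j, hj, l', hl', rfl⟩
    exact ⟨c, hc, j, hj, l' * l, mul_mem hl' hl, by group⟩

namespace FreelyNormalizes

theorem zpow_mul_mul_zpow_neg_mem (hs : FreelyNormalizes s L) (j : ℤ) {l : G} (hl : l ∈ L) :
    s ^ j * l * s ^ (-j) ∈ L := by
  rw [zpow_neg]
  exact (Subgroup.mem_normalizer_iff.1 (zpow_mem hs.mem_normalizer j) l).1 hl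

theorem mul_zpow_preimage_cosetSlab (hs : FreelyNormalizes s L) (C : Set G) (J : Set ℤ) (p : ℤ) :
    (· * s ^ p) ⁻¹' cosetSlab C s L J = cosetSlab C s L ((· + p) ⁻¹' J) := by
  ext g
  simp only [Set.mem_preimage, mem_cosetSlab]
  constructor
  · rintro ⟨c, hc, j, hj, l, hl, h⟩
    refine ⟨c, hc, j - p, by simpa using hj, _, hs.zpow_mul_mul_zpow_neg_mem p hl, ?_⟩
    rw [eq_mul_inv_of_mul_eq h.symm, sub_eq_add_neg, zpow_add]
    group
  · rintro ⟨c, hc, j, hj, l, hl, rfl⟩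
    refine ⟨c, hc, j + p, hj, _, hs.zpow_mul_mul_zpow_neg_mem (-p) hl, ?_⟩
    rw [zpow_add]
    group

theorem injective_mk_zpow (hs : FreelyNormalizes s L) :
    Function.Injective fun j : ℤ => (↑(s ^ j) : G ⧸ L) := by
  intro i j hij
  have := hs.eq_zero_of_zpow_mem (j - i) <| by
    rw [sub_eq_neg_add, zpow_add, zpow_neg]
    exact QuotientGroup.eq.1 hij
  lia

theorem exists_abs_sub_le (hs : FreelyNormalizes s L) {A B : Set G} (hA : A.Finite)
    (hB : B.Finite) :
    ∃ k : ℕ, ∀ i j g, g ∈ cosetSlab A s L {i} → g ∈ cosetSlab B s L {j} → |i - j| ≤ k := by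
  have hfin : {n : ℤ | (↑(s ^ n) : G ⧸ L) ∈ ((↑) : G → G ⧸ L) '' (A⁻¹ * B)}.Finite :=
    ((hA.inv.mul hB).image _).preimage hs.injective_mk_zpow.injOn
  obtain ⟨k, hk⟩ := (hfin.image Int.natAbs).bddAbove
  refine ⟨k, fun i j g hgi hgj => ?_⟩
  obtain ⟨a, ha, i, rfl, l, hl, rfl⟩ := mem_cosetSlab.1 hgi
  obtain ⟨b, hb, j, rfl, l', hl', h⟩ := mem_cosetSlab.1 hgj
  rw [Int.abs_eq_natAbs, Nat.cast_le]
  refine hk ⟨_, ⟨a⁻¹ * b, Set.mul_mem_mul (Set.inv_mem_inv.2 ha) hb, ?_⟩, rfl⟩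
  rw [QuotientGroup.eq]
  convert hs.zpow_mul_mul_zpow_neg_mem j (mul_mem hl' (inv_mem hl)) using 1
  rw [← mul_assoc, eq_inv_mul_of_mul_eq ((mul_assoc _ _ _).symm.trans h), zpow_sub]
  group

theorem exists_abs_le (hs : FreelyNormalizes s L) {A B : Set G} (hA : A.Finite)
    (hB : B.Finite) : ∃ k : ℕ, ∀ i, ∀ g ∈ B, g ∈ cosetSlab A s L {i} → |i| ≤ k := by
  obtain ⟨k, hk⟩ := hs.exists_abs_sub_le hA hB
  refine ⟨k, fun i g hgB hg => ?_⟩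
  simpa using hk i 0 g hg (by
    rw [cosetSlab_zero]
    exact ⟨g, hgB, 1, one_mem L, mul_one g⟩)

theorem exists_freelyNormalizes_inf {t : G} {K₁ N : Subgroup G} (ht : FreelyNormalizes t K₁)
    (hnorm : Subgroup.zpowers t ⊔ K₁ ≤ Subgroup.normalizer (N : Set G))
    (hindex : N.relIndex (Subgroup.zpowers t ⊔ K₁) ≠ 0) :
    ∃ s ∈ N, s ∈ Subgroup.zpowers t ∧ FreelyNormalizes s (K₁ ⊓ N) ∧ ∃ R : Set G, R.Finite ∧
      (↑(Subgroup.zpowers t ⊔ K₁) : Set G) ⊆ cosetSlab R s (K₁ ⊓ N) Set.univ := by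
  have htK : t ∈ Subgroup.zpowers t ⊔ K₁ := Subgroup.mem_sup_left (Subgroup.mem_zpowers t)
  have htL : t ∈ Subgroup.normalizer ((K₁ ⊓ N : Subgroup G) : Set G) :=
    Subgroup.mem_normalizer_iff.2 fun g =>
      and_congr (Subgroup.mem_normalizer_iff.1 ht.mem_normalizer g)
        (Subgroup.mem_normalizer_iff.1 (hnorm htK) g)
  obtain ⟨d, hd, -, htd⟩ := Subgroup.exists_pow_mem_of_relIndex_ne_zero hindex htK
  obtain ⟨R, hR, hK₁R⟩ := relIndex_ne_zero_iff_exists_finite_subset_mul.1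
    (show (K₁ ⊓ N).relIndex K₁ ≠ 0 by
      rw [Subgroup.inf_relIndex_left]
      exact mt (Subgroup.relIndex_eq_zero_of_le_right le_sup_right) hindex)
  refine ⟨t ^ d, htd.1, pow_mem (Subgroup.mem_zpowers t) d, ⟨pow_mem htL d, fun i hi => ?_⟩,
    R * (fun r : ℤ => t ^ r) '' Set.Ico 0 d, hR.mul ((Set.finite_Ico _ _).image _), ?_⟩
  · have := ht.eq_zero_of_zpow_mem (d * i) (by rw [zpow_mul, zpow_natCast]; exact hi.1)
    simpa [hd.ne'] using this
  · intro g hg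
    obtain ⟨i, k₁, hk₁, rfl⟩ := exists_zpow_mul_of_mem_zpowers_sup ht.mem_normalizer hg
    obtain ⟨r, hr, l, hl, hrl⟩ := hK₁R (ht.zpow_mul_mul_zpow_neg_mem i hk₁)
    have hd' : (0 : ℤ) < d := mod_cast hd
    refine mem_cosetSlab.2 ⟨r * t ^ (i % d), Set.mul_mem_mul hr ⟨_, ⟨Int.emod_nonneg _ hd'.ne',
      Int.emod_lt_of_pos _ hd'⟩, rfl⟩, i / d, trivial, t ^ (-i) * l * t ^ (- -i), ?_, ?_⟩
    · rw [zpow_neg t (-i)]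
      exact (Subgroup.mem_normalizer_iff.1 (zpow_mem htL (-i)) l).1 hl
    · have hti : t ^ (i % d) * (t ^ d) ^ (i / d) = t ^ i := by
        rw [← zpow_natCast, ← zpow_mul, ← zpow_add, Int.emod_add_mul_ediv]
      rw [mul_assoc r, hti, ← mul_left_inj (t ^ (-i)), ← hrl]
      group

end FreelyNormalizes

end CosetSlab

section Splice

variable {G X : Type*}

open Classical in
/-- The pattern that follows `z` on `A` and `y` off `A`. -/
noncomputable def splice (A : Set G) (z y : X) : G → X := A.piecewise (fun _ => z) (fun _ => y)

theorem comp_splice (φ : X → X) (A : Set G) (z y : X) :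
    φ ∘ splice A z y = splice A (φ z) (φ y) := by
  classical
  ext g
  by_cases hg : g ∈ A <;> simp [splice, hg]

theorem splice_apply_of_mem {A : Set G} {g : G} (hg : g ∈ A) (z y : X) : splice A z y g = z := by
  classical exact Set.piecewise_eq_of_mem _ _ _ hg

theorem splice_apply_of_notMem {A : Set G} {g : G} (hg : g ∉ A) (z y : X) :
    splice A z y g = y := by
  classical exact Set.piecewise_eq_of_notMem _ _ _ hg

theorem splice_eq_or (A : Set G) (z y : X) (g : G) :
    splice A z y g = z ∨ splice A z y g = y := by
  by_cases hg : g ∈ A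
  · exact Or.inl (splice_apply_of_mem hg z y)
  · exact Or.inr (splice_apply_of_notMem hg z y)

end Splice

section Separated

open scoped Pointwise

variable {G : Type*} [Group G] {V Ξ : Set G}

/-- The right translates `V * ξ` of `V` by the elements `ξ` of `Ξ` are pairwise disjoint. -/
def Separated (V Ξ : Set G) : Prop :=
  ∀ v ∈ V, ∀ v' ∈ V, ∀ ξ ∈ Ξ, ∀ ξ' ∈ Ξ, v * ξ = v' * ξ' → ξ = ξ'

theorem Separated.mono {Ξ' : Set G} (h : Separated V Ξ) (hΞ : Ξ' ⊆ Ξ) : Separated V Ξ' :=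
  fun v hv v' hv' ξ hξ ξ' hξ' => h v hv v' hv' ξ (hΞ hξ) ξ' (hΞ hξ')

theorem Separated.mul_subgroup (h : Separated V Ξ) {N : Subgroup G}
    (hN : ∀ a ∈ (V * Ξ)⁻¹ * (V * Ξ), a ∈ N → a = 1) : Separated V (Ξ * N) := by
  rintro v hv v' hv' _ ⟨ξ, hξ, n, hn, rfl⟩ _ ⟨ξ', hξ', n', hn', rfl⟩ heq
  simp only [← mul_assoc] at heq ⊢
  have hquot : (v' * ξ')⁻¹ * (v * ξ) = n' * n⁻¹ := by
    rw [inv_mul_eq_iff_eq_mul, ← mul_assoc, ← heq]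
    group
  have hone := hN _ (Set.mul_mem_mul (Set.inv_mem_inv.2 (Set.mul_mem_mul hv' hξ'))
    (Set.mul_mem_mul hv hξ)) (hquot ▸ mul_mem hn' (inv_mem hn))
  rw [h v hv v' hv' ξ hξ ξ' hξ' (inv_mul_eq_one.1 hone).symm,
    mul_inv_eq_one.1 (hquot.symm.trans hone)]

theorem Separated.preimage_mul_right (h : Separated V Ξ) (k : G) :
    Separated V ((· * k) ⁻¹' Ξ) := fun v hv v' hv' ξ hξ ξ' hξ' heq =>
  mul_right_cancel <| h v hv v' hv' _ hξ _ hξ' <| by rw [← mul_assoc, heq, mul_assoc]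

theorem Separated.exists_extend {α : Type*} (h : Separated V Ξ) (φ : G → α) (a : α) :
    ∃ P : G → α, (∀ v ∈ V, ∀ ξ ∈ Ξ, P (v * ξ) = φ ξ) ∧ ∀ g ∉ V * Ξ, P g = a := by
  classical
  refine ⟨fun g => if hg : ∃ ξ ∈ Ξ, ∃ v ∈ V, v * ξ = g then φ hg.choose else a,
    fun v hv ξ hξ => ?_, fun g hg => dif_neg fun ⟨ξ, hξ, v, hv, hvξ⟩ => hg ⟨v, hv, ξ, hξ, hvξ⟩⟩
  have hg : ∃ ξ' ∈ Ξ, ∃ v' ∈ V, v' * ξ' = v * ξ := ⟨ξ, hξ, v, hv, rfl⟩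
  obtain ⟨hξ', v', hv', heq⟩ := hg.choose_spec
  exact (dif_pos hg).trans (congrArg φ (h v' hv' v hv _ hξ' ξ hξ heq))

end Separated

section Dynamics

open Filter Topology
open scoped Pointwise

variable {G X : Type*} [Group G] [MetricSpace X] [MulAction G X]

theorem exists_finite_dist_lt_of_expansive [CompactSpace X] [ContinuousConstSMul G X] {Δ : ℝ}
    (hexp : ∀ x y : X, (∀ g : G, dist (g • x) (g • y) ≤ Δ) → x = y) {η : ℝ} (hη : 0 < η) :
    ∃ B : Set G, B.Finite ∧
      ∀ x y : X, (∀ g ∈ B, dist (g • x) (g • y) ≤ Δ) → dist x y < η := by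
  have hK : IsCompact {p : X × X | η ≤ dist p.1 p.2} :=
    (isClosed_le continuous_const continuous_dist).isCompact
  obtain ⟨B, hB⟩ := hK.elim_finite_subfamily_closed
    (fun g : G => {p : X × X | dist (g • p.1) (g • p.2) ≤ Δ})
    (fun g => isClosed_le (by fun_prop) continuous_const) <| by
      refine Set.eq_empty_of_forall_notMem fun p ⟨hp, hpΔ⟩ => ?_
      rw [Set.mem_ofPred_eq, hexp p.1 p.2 fun g => Set.mem_iInter.1 hpΔ g, dist_self] at hp
      exact hη.not_ge hp
  refine ⟨B, B.finite_toSet, fun x y h => ?_⟩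
  by_contra! hxy
  exact hB.subset (show (x, y) ∈ _ from ⟨hxy, Set.mem_iInter₂.2 fun g hg => h g hg⟩)

/-- A pointed system `(G, X, x₀)` with an endomorphism `f`, together with a scale `ε` such that
`4 * ε` is an expansivity constant and a finite symmetric window `Q` on which `4 * ε`-closeness of
two points forces `ε / 2`-closeness of the points and of their images under `f`. -/
structure CalibratedSystem (G X : Type*) [Group G] [MetricSpace X] [MulAction G X] where
  x₀ : X
  f : X → X
  ε : ℝ
  Q : Set G
  ε_pos : 0 < ε
  smul_x₀ : ∀ g : G, g • x₀ = x₀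
  continuous_f : Continuous f
  f_x₀ : f x₀ = x₀
  f_smul : ∀ (g : G) (x : X), f (g • x) = g • f x
  expansive : ∀ x y : X, (∀ g : G, dist (g • x) (g • y) ≤ 4 * ε) → x = y
  finite_Q : Q.Finite
  one_mem_Q : 1 ∈ Q
  inv_Q : Q⁻¹ = Q
  dist_le : ∀ x y : X, (∀ q ∈ Q, dist (q • x) (q • y) ≤ 4 * ε) → dist x y ≤ ε / 2
  dist_f_le : ∀ x y : X, (∀ q ∈ Q, dist (q • x) (q • y) ≤ 4 * ε) → dist (f x) (f y) ≤ ε / 2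

namespace CalibratedSystem

variable (S : CalibratedSystem G X)

/-- The support of a point: the times at which its orbit is visibly away from `x₀`. -/
def supp (y : X) : Set G := {g | S.ε < dist (g • y) S.x₀}

/-- Two points are indistinguishable, at the scale of expansivity, at all times in `B`. -/
def AgreeOn (B : Set G) (x y : X) : Prop := ∀ g ∈ B, dist (g • x) (g • y) ≤ 4 * S.ε

/-- A point is mortal if some iterate of `f` sends it to `x₀`. -/
def IsMortal (y : X) : Prop := ∃ n, S.f^[n] y = S.x₀

/-- The support of `y` is contained in finitely many left cosets of `K`. -/
def SuppFiniteMod (K : Subgroup G) (y : X) : Prop := ∃ T : Set G, T.Finite ∧ S.supp y ⊆ T * K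

/-- A pattern `P` prescribes for every `g : G` a point `P g` whose orbit is to be followed at the
time `g`. It is glueable if it only changes where the points in question are near `x₀`. -/
def Glueable (P : G → X) : Prop :=
  ∀ g, (∀ q ∈ S.Q, P (q * g) = P g) ∨ ∀ q ∈ S.Q, ∀ q' ∈ S.Q, q * g ∉ S.supp (P (q' * g))

/-- The orbit of `y` follows the pattern `P`. -/
def Realizes (y : X) (P : G → X) : Prop := ∀ g, dist (g • y) (g • P g) ≤ S.ε

/-- Gluing at the scale of the system. -/
def Gluing : Prop := ∀ P : G → X, S.Glueable P → ∃ y, S.Realizes y P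

/-- The iterates of `f` converge pointwise to `x₀`. -/
def AsymptoticallyNilpotent : Prop := ∀ x, Tendsto (fun n => S.f^[n] x) atTop (𝓝 S.x₀)

variable {S}

theorem notMem_supp {y : X} {g : G} : g ∉ S.supp y ↔ dist (g • y) S.x₀ ≤ S.ε := by
  rw [supp, Set.mem_ofPred_eq, not_lt]

theorem mem_supp_smul {y : X} {g h : G} : g ∈ S.supp (h • y) ↔ g * h ∈ S.supp y := by
  simp only [supp, Set.mem_ofPred_eq, mul_smul]

variable (S) in
theorem supp_x₀ : S.supp S.x₀ = ∅ :=
  Set.eq_empty_of_forall_notMem fun g => by simp [notMem_supp, S.smul_x₀, S.ε_pos.le]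

theorem eq_x₀_of_supp_eq_empty {y : X} (h : S.supp y = ∅) : y = S.x₀ := by
  refine S.expansive _ _ fun g => ?_
  have : dist (g • y) S.x₀ ≤ S.ε := notMem_supp.1 (h ▸ Set.notMem_empty g)
  rw [S.smul_x₀]
  linarith [S.ε_pos]

theorem iterate_smul (n : ℕ) (g : G) (x : X) : S.f^[n] (g • x) = g • S.f^[n] x :=
  Function.Commute.iterate_left (f := S.f) (g := (g • ·)) (S.f_smul g) n x

theorem iterate_eq_x₀_of_le {y : X} {m n : ℕ} (h : S.f^[m] y = S.x₀) (hmn : m ≤ n) :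
    S.f^[n] y = S.x₀ := by
  rw [← Nat.sub_add_cancel hmn, Function.iterate_add_apply, h, Function.iterate_fixed S.f_x₀]

theorem isMortal_iterate_iff {y : X} {m : ℕ} : S.IsMortal (S.f^[m] y) ↔ S.IsMortal y := by
  constructor
  · rintro ⟨n, hn⟩
    exact ⟨n + m, by rw [Function.iterate_add_apply, hn]⟩
  · rintro ⟨n, hn⟩
    refine ⟨n, ?_⟩
    rw [← Function.iterate_add_apply]
    exact iterate_eq_x₀_of_le hn (Nat.le_add_right n m)

theorem IsMortal.smul {y : X} (h : S.IsMortal y) (g : G) : S.IsMortal (g • y) := by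
  obtain ⟨n, hn⟩ := h
  exact ⟨n, by rw [iterate_smul, hn, S.smul_x₀]⟩

variable (S) in
theorem finite_Q_pow (n : ℕ) : (S.Q ^ n).Finite := by
  induction n with
  | zero => simp
  | succ n ih => exact pow_succ S.Q n ▸ ih.mul S.finite_Q

theorem inv_mem_Q {q : G} (hq : q ∈ S.Q) : q⁻¹ ∈ S.Q := by rwa [← Set.mem_inv, S.inv_Q]

variable (S) in
theorem inv_Q_pow (n : ℕ) : (S.Q ^ n)⁻¹ = S.Q ^ n := by rw [← inv_pow, S.inv_Q]

variable (S) in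
theorem one_mem_Q_pow (n : ℕ) : 1 ∈ S.Q ^ n := Set.one_mem_pow S.one_mem_Q

theorem Q_pow_mono {m n : ℕ} (h : m ≤ n) : S.Q ^ m ⊆ S.Q ^ n :=
  Set.pow_subset_pow_right S.one_mem_Q h

theorem inv_mem_Q_pow {n : ℕ} {u : G} (hu : u ∈ S.Q ^ n) : u⁻¹ ∈ S.Q ^ n := by
  rwa [← Set.mem_inv, inv_Q_pow]

theorem subset_Q_pow_mul (n : ℕ) (A : Set G) : A ⊆ S.Q ^ n * A :=
  Set.subset_mul_right A (S.one_mem_Q_pow n)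

theorem mul_inv_mem_Q_sq {q q' : G} (hq : q ∈ S.Q) (hq' : q' ∈ S.Q) : q * q'⁻¹ ∈ S.Q ^ 2 := by
  rw [pow_two]
  exact Set.mul_mem_mul hq (inv_mem_Q hq')

theorem disjoint_Q_pow_mul_iff (n : ℕ) {A B : Set G} :
    Disjoint (S.Q ^ n * A) B ↔ Disjoint A (S.Q ^ n * B) := by
  have key {A B : Set G} (h : Disjoint A (S.Q ^ n * B)) : Disjoint (S.Q ^ n * A) B := by
    rw [Set.disjoint_left] at h ⊢
    rintro _ ⟨u, hu, a, ha, rfl⟩ hb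
    exact h ha ⟨u⁻¹, inv_mem_Q_pow hu, _, hb, inv_mul_cancel_left u a⟩
  exact ⟨fun h => (key h.symm).symm, key⟩

theorem exists_mem_supp_of_mem_supp_f {y : X} {g : G} (h : g ∈ S.supp (S.f y)) :
    ∃ q ∈ S.Q, q * g ∈ S.supp y := by
  by_contra! hc
  have := S.dist_f_le (g • y) S.x₀ fun q hq => by
    have := notMem_supp.1 (hc q hq)
    rw [mul_smul] at this
    rw [S.smul_x₀]
    linarith [S.ε_pos]
  rw [S.f_smul, S.f_x₀] at this
  exact notMem_supp.2 (this.trans (half_le_self S.ε_pos.le)) h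

theorem Q_pow_mul_supp_iterate_subset (y : X) {k i n : ℕ} (h : k + i ≤ n) :
    S.Q ^ k * S.supp (S.f^[i] y) ⊆ S.Q ^ n * S.supp y := by
  refine Set.Subset.trans ?_ (Set.mul_subset_mul_right (Q_pow_mono h))
  rw [pow_add, mul_assoc]
  refine Set.mul_subset_mul_left ?_
  clear h
  induction i with
  | zero => exact subset_Q_pow_mul 0 _
  | succ i ih =>
    intro g hg
    rw [Function.iterate_succ_apply'] at hg
    obtain ⟨q, hq, hqg⟩ := exists_mem_supp_of_mem_supp_f hg
    rw [pow_succ', mul_assoc]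
    exact ⟨q⁻¹, inv_mem_Q hq, q * g, ih hqg, inv_mul_cancel_left q g⟩

variable (S) in
theorem supp_iterate_subset (y : X) (n : ℕ) : S.supp (S.f^[n] y) ⊆ S.Q ^ n * S.supp y :=
  (subset_Q_pow_mul 0 _).trans (Q_pow_mul_supp_iterate_subset y (by lia))

theorem AgreeOn.mono {A B : Set G} {x y : X} (h : S.AgreeOn B x y) (hAB : A ⊆ B) :
    S.AgreeOn A x y := fun g hg => h g (hAB hg)

theorem AgreeOn.dist_le {B : Set G} {x y : X} (h : S.AgreeOn (S.Q * B) x y) {g : G}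
    (hg : g ∈ B) : dist (g • x) (g • y) ≤ S.ε / 2 :=
  S.dist_le _ _ fun q hq => by
    rw [← mul_smul, ← mul_smul]
    exact h _ (Set.mul_mem_mul hq hg)

theorem AgreeOn.f {B : Set G} {x y : X} (h : S.AgreeOn (S.Q * B) x y) :
    S.AgreeOn B (S.f x) (S.f y) := fun g hg => by
  have := S.dist_f_le (g • x) (g • y) fun q hq => by
    rw [← mul_smul, ← mul_smul]
    exact h _ (Set.mul_mem_mul hq hg)
  rw [S.f_smul, S.f_smul] at this
  linarith [S.ε_pos]

theorem AgreeOn.iterate {B : Set G} {x y : X} (n : ℕ) (h : S.AgreeOn (S.Q ^ n * B) x y) :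
    S.AgreeOn B (S.f^[n] x) (S.f^[n] y) := by
  induction n generalizing B with
  | zero => simpa using h
  | succ n ih =>
    simp only [Function.iterate_succ_apply']
    refine AgreeOn.f (ih ?_)
    rwa [← mul_assoc, ← pow_succ]

theorem Glueable.realizes_f {P : G → X} (hP : S.Glueable P) {y : X} (hy : S.Realizes y P) :
    S.Realizes (S.f y) (S.f ∘ P) := by
  have hε := S.ε_pos
  intro g
  change dist (g • S.f y) (g • S.f (P g)) ≤ S.ε
  rcases hP g with hconst | hclose
  · have := S.dist_f_le (g • y) (g • P g) fun q hq => by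
      have := hy (q * g)
      rw [hconst q hq] at this
      rw [← mul_smul, ← mul_smul]
      linarith
    rw [S.f_smul, S.f_smul] at this
    linarith
  · have hy₀ := S.dist_f_le (g • y) S.x₀ fun q hq => by
      have h₁ := hy (q * g)
      have h₂ := notMem_supp.1 (hclose q hq q hq)
      have := dist_triangle ((q * g) • y) ((q * g) • P (q * g)) S.x₀
      rw [← mul_smul, S.smul_x₀]
      linarith
    have hP₀ := S.dist_f_le (g • P g) S.x₀ fun q hq => by
      have := notMem_supp.1 (hclose q hq 1 S.one_mem_Q)
      rw [one_mul] at this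
      rw [← mul_smul, S.smul_x₀]
      linarith
    rw [S.f_smul, S.f_x₀] at hy₀ hP₀
    linarith [dist_triangle_right (g • S.f y) (g • S.f (P g)) S.x₀]

theorem Realizes.iterate {P : G → X} {y : X} (hy : S.Realizes y P) (n : ℕ)
    (hP : ∀ m < n, S.Glueable (S.f^[m] ∘ P)) : S.Realizes (S.f^[n] y) (S.f^[n] ∘ P) := by
  induction n with
  | zero => exact hy
  | succ n ih =>
    simp only [Function.iterate_succ', Function.comp_assoc]
    exact (hP n n.lt_succ_self).realizes_f (ih fun m hm => hP m (hm.trans n.lt_succ_self))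

theorem Realizes.unique {P : G → X} {y y' : X} (h : S.Realizes y P) (h' : S.Realizes y' P) :
    y = y' :=
  S.expansive _ _ fun g => by
    have := dist_triangle_right (g • y) (g • y') (g • P g)
    linarith [h g, h' g, S.ε_pos]

theorem Realizes.supp_subset {P : G → X} {y : X} (hy : S.Realizes y P) :
    S.supp y ⊆ S.Q * {g | g ∈ S.supp (P g)} := by
  intro g hg
  obtain ⟨q, hq, hqg⟩ : ∃ q ∈ S.Q, q * g ∈ S.supp (P (q * g)) := by
    by_contra! hc
    have := S.dist_le (g • y) S.x₀ fun q hq => by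
      have h₁ := notMem_supp.1 (hc q hq)
      have h₂ := hy (q * g)
      have := dist_triangle ((q * g) • y) ((q * g) • P (q * g)) S.x₀
      rw [← mul_smul, S.smul_x₀]
      linarith [S.ε_pos]
    exact notMem_supp.2 (this.trans (half_le_self S.ε_pos.le)) hg
  exact ⟨q⁻¹, inv_mem_Q hq, q * g, hqg, inv_mul_cancel_left q g⟩

section Splice

variable (S) in
/-- Near every time in the support of `y`, membership in `A` is constant. -/
def CutsCleanly (A : Set G) (y : X) : Prop :=
  ∀ h ∈ S.supp y, (∀ u ∈ S.Q ^ 2, u * h ∈ A) ∨ ∀ u ∈ S.Q ^ 2, u * h ∉ A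

theorem cutsCleanly_x₀ (A : Set G) : S.CutsCleanly A S.x₀ := by
  simp [CutsCleanly, supp_x₀]

theorem CutsCleanly.of_subset {A : Set G} {y : X} (h : S.Q ^ 2 * S.supp y ⊆ A) :
    S.CutsCleanly A y := fun _ hg => Or.inl fun _ hu => h (Set.mul_mem_mul hu hg)

theorem CutsCleanly.of_disjoint {A : Set G} {y : X} (h : Disjoint (S.Q ^ 2 * S.supp y) A) :
    S.CutsCleanly A y :=
  fun _ hg => Or.inr fun _ hu => Set.disjoint_left.1 h (Set.mul_mem_mul hu hg)

theorem CutsCleanly.splice_eq {A : Set G} {w : X} (hw : S.CutsCleanly A w) (z y : X)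
    {q g : G} (hq : q ∈ S.Q) (hqg : q * g ∈ S.supp w) {q' : G} (hq' : q' ∈ S.Q) :
    splice A z y (q' * g) = splice A z y g := by
  have hmem {p : G} (hp : p ∈ S.Q) : p * g = p * q⁻¹ * (q * g) ∧ p * q⁻¹ ∈ S.Q ^ 2 :=
    ⟨by group, mul_inv_mem_Q_sq hp hq⟩
  have hg : 1 * g = g := one_mul g
  rcases hw _ hqg with h | h <;>
    have hA {p : G} (hp : p ∈ S.Q) := (hmem hp).1 ▸ h _ (hmem hp).2
  · rw [splice_apply_of_mem (hA hq'), splice_apply_of_mem (hg ▸ hA S.one_mem_Q)]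
  · rw [splice_apply_of_notMem (hA hq'), splice_apply_of_notMem (hg ▸ hA S.one_mem_Q)]

theorem glueable_splice {A : Set G} {z y : X} (hz : S.CutsCleanly A z) (hy : S.CutsCleanly A y) :
    S.Glueable (splice A z y) := by
  intro g
  by_cases! hgz : ∃ q ∈ S.Q, q * g ∈ S.supp z
  · obtain ⟨q, hq, hqg⟩ := hgz
    exact Or.inl fun q' hq' => hz.splice_eq z y hq hqg hq'
  by_cases! hgy : ∃ q ∈ S.Q, q * g ∈ S.supp y
  · obtain ⟨q, hq, hqg⟩ := hgy
    exact Or.inl fun q' hq' => hy.splice_eq z y hq hqg hq'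
  refine Or.inr fun q hq q' _ => ?_
  rcases splice_eq_or A z y (q' * g) with h | h <;> rw [h]
  exacts [hgz q hq, hgy q hq]

theorem Realizes.supp_subset_of_splice {A : Set G} {z y w : X}
    (hw : S.Realizes w (splice A z y)) : S.supp w ⊆ S.Q * (S.supp z ∩ A ∪ S.supp y \ A) := by
  refine hw.supp_subset.trans (Set.mul_subset_mul_left fun g hg => ?_)
  rw [Set.mem_ofPred_eq] at hg
  by_cases hgA : g ∈ A
  · rw [splice_apply_of_mem hgA] at hg
    exact Or.inl ⟨hg, hgA⟩
  · rw [splice_apply_of_notMem hgA] at hg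
    exact Or.inr ⟨hg, hgA⟩

theorem Realizes.agreeOn_of_splice {A B : Set G} {z y w : X} (hw : S.Realizes w (splice A z y))
    (hB : B ⊆ A) : S.AgreeOn B w z := fun g hg => by
  have := hw g
  rw [splice_apply_of_mem (hB hg)] at this
  linarith [S.ε_pos]

theorem exists_splice_iterate_eq (hS : S.Gluing) {A : Set G} {z y : X} {τ : ℕ}
    (hτ : S.f^[τ] z = S.x₀) (hz : S.Q ^ (2 + τ) * S.supp z ⊆ A)
    (hy : Disjoint (S.Q ^ (2 + τ) * S.supp y) A) :
    ∃ w, S.Realizes w (splice A z y) ∧ S.f^[τ] w = S.f^[τ] y := by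
  have hglue (i : ℕ) (hi : i ≤ τ) : S.Glueable (S.f^[i] ∘ splice A z y) := by
    have hle : 2 + i ≤ 2 + τ := Nat.add_le_add_left hi 2
    rw [comp_splice]
    exact glueable_splice (.of_subset ((Q_pow_mul_supp_iterate_subset z hle).trans hz))
      (.of_disjoint (hy.mono_left (Q_pow_mul_supp_iterate_subset y hle)))
  have hglue₀ : S.Glueable (splice A z y) := hglue 0 τ.zero_le
  obtain ⟨w, hw⟩ := hS _ hglue₀
  refine ⟨w, hw, (hw.iterate τ fun i hi => hglue i hi.le).unique fun g => ?_⟩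
  rw [comp_splice, hτ]
  by_cases hg : g ∈ A
  · rw [splice_apply_of_mem hg, S.smul_x₀, ← notMem_supp]
    refine fun hgy => Set.disjoint_left.1 hy ?_ hg
    exact Q_pow_mul_supp_iterate_subset y (k := 0) (by lia) (subset_Q_pow_mul 0 _ hgy)
  · simp [splice_apply_of_notMem hg, S.ε_pos.le]

end Splice

section Topology

theorem AsymptoticallyNilpotent.eventually_dist_smul_iterate_lt [ContinuousConstSMul G X]
    (hf : S.AsymptoticallyNilpotent) (y : X) {W : Set G} (hW : W.Finite) :
    ∀ᶠ n in atTop, ∀ c ∈ W, dist (c • S.f^[n] y) S.x₀ < S.ε := by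
  refine (eventually_all_finite hW).2 fun c _ => ?_
  have hlim : Tendsto (fun n => c • S.f^[n] y) atTop (𝓝 S.x₀) := by
    simpa only [S.smul_x₀] using (hf y).const_smul c
  exact hlim.eventually (Metric.ball_mem_nhds S.x₀ S.ε_pos)

theorem AsymptoticallyNilpotent.exists_forall_disjoint_supp [ContinuousConstSMul G X]
    (hf : S.AsymptoticallyNilpotent) (y : X) {W : Set G} (hW : W.Finite) :
    ∃ m, ∀ n ≥ m, Disjoint W (S.supp (S.f^[n] y)) := by
  obtain ⟨m, hm⟩ := eventually_atTop.1 (hf.eventually_dist_smul_iterate_lt y hW)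
  exact ⟨m, fun n hn => Set.disjoint_left.2 fun c hc => notMem_supp.2 (hm n hn c hc).le⟩

variable (S) in
theorem isClosed_setOf_notMem_supp_iterate [ContinuousConstSMul G X] (n : ℕ) (c : G) :
    IsClosed {y | c ∉ S.supp (S.f^[n] y)} := by
  simp only [notMem_supp]
  exact isClosed_le (((S.continuous_f.iterate n).const_smul c).dist continuous_const)
    continuous_const

theorem isMortal_of_supp_iterate_subset [ContinuousConstSMul G X]
    (hf : S.AsymptoticallyNilpotent) {L : Subgroup G} {y : X} (hL : ∀ l ∈ L, l • y = y)
    {T : Set G} (hT : T.Finite) (h : ∀ n, S.supp (S.f^[n] y) ⊆ T * L) : S.IsMortal y := by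
  obtain ⟨m, hm⟩ := hf.exists_forall_disjoint_supp y hT
  refine ⟨m, eq_x₀_of_supp_eq_empty (Set.eq_empty_of_forall_notMem fun g hg => ?_)⟩
  obtain ⟨t, ht, l, hl, rfl⟩ := h m hg
  rw [← mem_supp_smul, ← iterate_smul, hL l hl] at hg
  exact Set.disjoint_left.1 (hm m le_rfl) ht hg

variable [CompactSpace X] [ContinuousConstSMul G X]

variable (S) in
theorem exists_finite_agreeOn_dist_lt {η : ℝ} (hη : 0 < η) :
    ∃ B : Set G, B.Finite ∧ ∀ x y, S.AgreeOn B x y → dist x y < η :=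
  exists_finite_dist_lt_of_expansive S.expansive hη

theorem notMem_supp_iterate_of_forall_finite_agreeOn {y : X} {c : G} {n : ℕ}
    (h : ∀ B : Set G, B.Finite → ∃ y', S.AgreeOn B y' y ∧ c ∉ S.supp (S.f^[n] y')) :
    c ∉ S.supp (S.f^[n] y) := by
  suffices y ∈ closure {y | c ∉ S.supp (S.f^[n] y)} from
    (S.isClosed_setOf_notMem_supp_iterate n c).closure_subset this
  refine Metric.mem_closure_iff.2 fun η hη => ?_
  obtain ⟨B, hB, hdist⟩ := S.exists_finite_agreeOn_dist_lt hη
  obtain ⟨y', hy', hc⟩ := h B hB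
  exact ⟨y', hc, by rw [dist_comm]; exact hdist _ _ hy'⟩

/-- The Baire category theorem on the closure of `P`. -/
theorem AsymptoticallyNilpotent.exists_uniform_on_agreeOn (hf : S.AsymptoticallyNilpotent)
    {P : Set X} (hP : P.Nonempty) {W : Set G} (hW : W.Finite) :
    ∃ z ∈ P, ∃ B : Set G, B.Finite ∧ ∃ m : ℕ, ∀ z' ∈ P, S.AgreeOn B z' z →
      ∀ n ≥ m, Disjoint W (S.supp (S.f^[n] z')) := by
  have : CompactSpace (closure P) := isCompact_iff_compactSpace.1 isClosed_closure.isCompact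
  have : Nonempty (closure P) := hP.closure.to_subtype
  let F (m : ℕ) : Set (closure P) := {y | ∀ n ≥ m, Disjoint W (S.supp (S.f^[n] (y : X)))}
  have hF (m : ℕ) : IsClosed (F m) := by
    simp only [F, Set.disjoint_left, Set.ofPred_forall]
    exact isClosed_biInter fun n _ => isClosed_biInter fun c _ =>
      (S.isClosed_setOf_notMem_supp_iterate n c).preimage continuous_subtype_val
  have hcover : ⋃ m, F m = Set.univ := Set.eq_univ_of_forall fun y =>
    Set.mem_iUnion.2 (hf.exists_forall_disjoint_supp y hW)
  obtain ⟨m, y, hy⟩ := nonempty_interior_of_iUnion_of_closed hF hcover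
  obtain ⟨O, hO, hOF⟩ := isOpen_induced_iff.1 (isOpen_interior (s := F m))
  rw [← hOF] at hy
  obtain ⟨z, hzO, hzP⟩ := mem_closure_iff.1 y.2 O hO hy
  obtain ⟨η, hη, hball⟩ := Metric.isOpen_iff.1 hO z hzO
  obtain ⟨B, hB, hdist⟩ := S.exists_finite_agreeOn_dist_lt hη
  refine ⟨z, hzP, B, hB, m, fun z' hz' hagree => ?_⟩
  have hz'F : (⟨z', subset_closure hz'⟩ : closure P) ∈ interior (F m) :=
    hOF ▸ hball (hdist _ _ hagree)
  exact interior_subset hz'F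

theorem AsymptoticallyNilpotent.exists_uniform_of_disjoint (hf : S.AsymptoticallyNilpotent)
    (hS : S.Gluing) (K : Subgroup G) {W : Set G} (hW : W.Finite) :
    ∃ D : Set G, D.Finite ∧ ∃ N : ℕ, ∀ y, S.IsMortal y → S.SuppFiniteMod K y →
      Disjoint (D * K) (S.supp y) → ∀ n ≥ N, Disjoint W (S.supp (S.f^[n] y)) := by
  obtain ⟨z, ⟨⟨τ, hτ⟩, S₀, hS₀, hzS₀⟩, B, hB, m, hm⟩ :=
    hf.exists_uniform_on_agreeOn (P := {y | S.IsMortal y ∧ S.SuppFiniteMod K y})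
      ⟨S.x₀, ⟨0, rfl⟩, ∅, Set.finite_empty, by simp [supp_x₀]⟩ hW
  let A := S.Q ^ (2 + τ) * ((S₀ ∪ B) * K)
  refine ⟨S.Q ^ (2 + τ) * (S.Q ^ (2 + τ) * (S₀ ∪ B)), (S.finite_Q_pow _).mul
    ((S.finite_Q_pow _).mul (hS₀.union hB)), max m τ, fun y hy ⟨T, hT, hyT⟩ hdisj n hn => ?_⟩
  obtain ⟨w, hw, hwτ⟩ := exists_splice_iterate_eq hS (A := A) hτ
    (Set.mul_subset_mul_left (hzS₀.trans (Set.mul_subset_mul_right Set.subset_union_left)))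
    ((disjoint_Q_pow_mul_iff _).2 (by simpa only [A, mul_assoc] using hdisj.symm))
  have hwn {n : ℕ} (hn : τ ≤ n) : S.f^[n] w = S.f^[n] y := by
    rw [← Nat.sub_add_cancel hn, Function.iterate_add_apply, hwτ, ← Function.iterate_add_apply]
  have hwmortal : S.IsMortal w := by
    rwa [← isMortal_iterate_iff (m := τ), hwτ, isMortal_iterate_iff]
  have hwfin : S.SuppFiniteMod K w := by
    refine ⟨S.Q * (S₀ ∪ T), S.finite_Q.mul (hS₀.union hT), hw.supp_subset_of_splice.trans ?_⟩
    rw [mul_assoc, Set.union_mul]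
    exact Set.mul_subset_mul_left (Set.union_subset_union
      (Set.inter_subset_left.trans hzS₀) (Set.sdiff_subset.trans hyT))
  rw [← hwn ((le_max_right _ _).trans hn)]
  refine hm w ⟨hwmortal, hwfin⟩ (hw.agreeOn_of_splice ?_) n ((le_max_left _ _).trans hn)
  exact fun b hb => subset_Q_pow_mul _ _ ⟨b, Or.inr hb, 1, one_mem K, mul_one b⟩

end Topology

section SumOfTranslates

variable (S) in
/-- A neighbourhood of the support of `x`, outside of which `x` is close to `x₀` with room to spare
for gluing. -/
def hull (x : X) : Set G := S.Q ^ 2 * S.supp x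

variable (S) in
/-- The point `y` is the sum of the translates `ξ⁻¹ • x`, `ξ ∈ Ξ`: it follows `ξ⁻¹ • x` on
`hull x * ξ` and is close to `x₀` elsewhere. -/
structure IsSum (x : X) (Ξ : Set G) (y : X) : Prop where
  dist_le : ∀ v ∈ S.hull x, ∀ ξ ∈ Ξ, dist ((v * ξ) • y) (v • x) ≤ S.ε
  supp_subset : S.supp y ⊆ S.hull x * Ξ

variable {x y y' : X} {Ξ Ξ' : Set G}

theorem finite_hull (hx : (S.supp x).Finite) : (S.hull x).Finite := (S.finite_Q_pow 2).mul hx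

theorem exists_isSum (hS : S.Gluing) (hΞ : Separated (S.hull x) Ξ) : ∃ y, S.IsSum x Ξ y := by
  obtain ⟨P, hP, hP₀⟩ := hΞ.exists_extend (fun ξ => ξ⁻¹ • x) S.x₀
  have hglue : S.Glueable P := by
    intro g
    by_cases! hg : ∃ q ∈ S.Q, ∃ ξ ∈ Ξ, q * g ∈ S.supp (ξ⁻¹ • x)
    · obtain ⟨q, hq, ξ, hξ, hqg⟩ := hg
      have hconst {q' : G} (hq' : q' ∈ S.Q) : P (q' * g) = ξ⁻¹ • x := by
        rw [← hP (q' * q⁻¹ * (q * g * ξ⁻¹))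
          (Set.mul_mem_mul (mul_inv_mem_Q_sq hq' hq) (mem_supp_smul.1 hqg)) ξ hξ]
        congr 1
        group
      refine Or.inl fun q' hq' => ?_
      rw [hconst hq', ← hconst S.one_mem_Q, one_mul]
    · refine Or.inr fun q hq q' _ => ?_
      by_cases hmem : q' * g ∈ S.hull x * Ξ
      · obtain ⟨v, hv, ξ, hξ, hvξ⟩ := hmem
        rw [← hvξ, hP v hv ξ hξ]
        exact hg q hq ξ hξ
      · simp [hP₀ _ hmem, supp_x₀]
  obtain ⟨y, hy⟩ := hS P hglue
  refine ⟨y, fun v hv ξ hξ => ?_, fun g hg => ?_⟩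
  · simpa [hP v hv ξ hξ, ← mul_smul] using hy (v * ξ)
  · by_contra hmem
    refine notMem_supp.2 ?_ hg
    simpa [hP₀ g hmem, S.smul_x₀] using hy g

theorem IsSum.agreeOn (hy : S.IsSum x Ξ y) (hy' : S.IsSum x Ξ' y') {B : Set G}
    (h : ∀ g ∈ (S.hull x)⁻¹ * B, g ∈ Ξ ↔ g ∈ Ξ') : S.AgreeOn B y y' := by
  intro g hg
  have hmem {v ξ : G} (hv : v ∈ S.hull x) (hvξ : v * ξ = g) : ξ ∈ Ξ ↔ ξ ∈ Ξ' :=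
    h ξ ⟨v⁻¹, Set.inv_mem_inv.2 hv, g, hg, (eq_inv_mul_of_mul_eq hvξ).symm⟩
  by_cases hgΞ : g ∈ S.hull x * Ξ
  · obtain ⟨v, hv, ξ, hξ, rfl⟩ := hgΞ
    have := dist_triangle_right ((v * ξ) • y) ((v * ξ) • y') (v • x)
    linarith [hy.dist_le v hv ξ hξ, hy'.dist_le v hv ξ ((hmem hv rfl).1 hξ), S.ε_pos]
  · have hgΞ' : g ∉ S.hull x * Ξ' := by
      rintro ⟨v, hv, ξ, hξ, hvξ⟩
      exact hgΞ ⟨v, hv, ξ, (hmem hv hvξ).2 hξ, hvξ⟩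
    have h₁ := notMem_supp.1 fun hg => hgΞ (hy.supp_subset hg)
    have h₂ := notMem_supp.1 fun hg => hgΞ' (hy'.supp_subset hg)
    linarith [dist_triangle_right (g • y) (g • y') S.x₀, S.ε_pos]

theorem IsSum.unique (hy : S.IsSum x Ξ y) (hy' : S.IsSum x Ξ y') : y = y' :=
  S.expansive _ _ fun g => hy.agreeOn hy' (fun _ _ => Iff.rfl) g (Set.mem_univ g)

theorem IsSum.smul (hy : S.IsSum x Ξ y) (k : G) : S.IsSum x ((· * k) ⁻¹' Ξ) (k • y) where
  dist_le v hv ξ hξ := by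
    rw [← mul_smul, mul_assoc]
    exact hy.dist_le v hv _ hξ
  supp_subset g hg := by
    obtain ⟨v, hv, ξ, hξ, hvξ⟩ := hy.supp_subset (mem_supp_smul.1 hg)
    refine ⟨v, hv, ξ * k⁻¹, by simpa using hξ, ?_⟩
    simp only [← mul_assoc, eq_mul_inv_of_mul_eq hvξ.symm]

theorem IsSum.smul_eq (hy : S.IsSum x Ξ y) {k : G} (hk : (· * k) ⁻¹' Ξ = Ξ) : k • y = y := by
  have := hy.smul k
  rw [hk] at this
  exact this.unique hy

variable (S) in
theorem isSum_singleton_one (x : X) : S.IsSum x {1} x where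
  dist_le v _ ξ hξ := by
    rw [Set.mem_singleton_iff.1 hξ, mul_one, dist_self]
    exact S.ε_pos.le
  supp_subset := by
    rw [Set.singleton_one, mul_one]
    exact subset_Q_pow_mul 2 _

theorem IsSum.supp_iterate_subset (hy : S.IsSum x Ξ y) (n : ℕ) :
    S.supp (S.f^[n] y) ⊆ S.Q ^ n * S.hull x * Ξ := by
  rw [mul_assoc]
  exact (S.supp_iterate_subset y n).trans (Set.mul_subset_mul_left hy.supp_subset)

theorem IsSum.exists_finite_agreeOn (hy : S.IsSum x Ξ y) (hS : S.Gluing)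
    (hx : (S.supp x).Finite) (hΞ : Separated (S.hull x) Ξ) {B : Set G} (hB : B.Finite) :
    ∃ Ξ' ⊆ Ξ, Ξ'.Finite ∧ ∃ y', S.IsSum x Ξ' y' ∧ S.AgreeOn B y' y := by
  have hsub : Ξ ∩ ((S.hull x)⁻¹ * B) ⊆ Ξ := Set.inter_subset_left
  obtain ⟨y', hy'⟩ := exists_isSum hS (hΞ.mono hsub)
  exact ⟨_, hsub, ((finite_hull hx).inv.mul hB).inter_of_right Ξ, y', hy',
    hy'.agreeOn hy fun g hg => and_iff_left hg⟩

end SumOfTranslates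

section Stratified

variable {x y w d : X} {Ξ C : Set G} {s : G} {L : Subgroup G} {J J' : Set ℤ}

variable (S) in
/-- The sums of translates of `x` over the slabs `cosetSlab Ξ s L J` exist, and the supports of all
their iterates stay in finitely many translates of `⟨s⟩ * L`, indexed by `C`. -/
structure IsStratified (x : X) (Ξ : Set G) (s : G) (L : Subgroup G) (C : Set G) : Prop where
  freelyNormalizes : FreelyNormalizes s L
  finite_supp : (S.supp x).Finite
  finite_translations : Ξ.Finite
  finite_carrier : C.Finite
  separated : Separated (S.hull x) (cosetSlab Ξ s L Set.univ)
  supp_iterate_subset : ∀ J y n, S.IsSum x (cosetSlab Ξ s L J) y →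
    S.supp (S.f^[n] y) ⊆ cosetSlab C s L Set.univ

theorem Realizes.smul {P : G → X} (h : S.Realizes y P) (k : G) :
    S.Realizes (k • y) fun g => k • P (g * k) := fun g => by
  simpa only [mul_smul] using h (g * k)

theorem Realizes.smul_eq_of_splice {A : Set G} {z : X} (hd : S.Realizes d (splice A z y)) {k : G}
    (hA : (· * k) ⁻¹' A = A) (hz : k • z = z) (hy : k • y = y) : k • d = d := by
  refine Realizes.unique ?_ hd
  convert hd.smul k using 2 with g
  have hgk : g * k ∈ A ↔ g ∈ A := Set.ext_iff.1 hA g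
  by_cases hg : g ∈ A
  · rw [splice_apply_of_mem hg, splice_apply_of_mem (hgk.2 hg), hz]
  · rw [splice_apply_of_notMem hg, splice_apply_of_notMem (mt hgk.1 hg), hy]

theorem SuppFiniteMod.smul (h : S.SuppFiniteMod L y) (hs : s ∈ Subgroup.normalizer (L : Set G)) :
    S.SuppFiniteMod L (s • y) := by
  obtain ⟨T, hT, hy⟩ := h
  refine ⟨T * {s⁻¹}, hT.mul (Set.finite_singleton _), fun g hg => ?_⟩
  obtain ⟨t, ht, l, hl, htl⟩ := hy (mem_supp_smul.1 hg)
  refine ⟨t * s⁻¹, ⟨t, ht, s⁻¹, rfl, rfl⟩, s * l * s⁻¹,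
    (Subgroup.mem_normalizer_iff.1 hs l).1 hl, ?_⟩
  rw [eq_mul_inv_of_mul_eq htl.symm]
  group

theorem IsSum.smul_iterate_eq (hw : S.IsSum x (cosetSlab Ξ s L J) w) (n : ℕ) {l : G}
    (hl : l ∈ L) : l • S.f^[n] w = S.f^[n] w := by
  rw [← iterate_smul, hw.smul_eq (mul_right_preimage_cosetSlab Ξ J hl)]

theorem IsSum.disjoint_supp_iterate_of_smul (hw : S.IsSum x (cosetSlab Ξ s L J) w) {p : ℤ}
    {R n : ℕ} (h : Disjoint (C * (fun j : ℤ => s ^ j) '' Set.Icc (-R) R)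
      (S.supp (S.f^[n] (s ^ p • w)))) :
    Disjoint (cosetSlab C s L {j | |j - p| ≤ R}) (S.supp (S.f^[n] w)) := by
  rw [Set.disjoint_left] at h ⊢
  intro g hg hgw
  obtain ⟨c, hc, j, hj, l, hl, rfl⟩ := mem_cosetSlab.1 hg
  refine h ⟨c, hc, _, ⟨j - p, abs_le.1 hj, rfl⟩, rfl⟩ ?_
  rw [iterate_smul, mem_supp_smul, mul_assoc, ← zpow_add, sub_add_cancel]
  rwa [← mem_supp_smul, hw.smul_iterate_eq n hl] at hgw

namespace IsStratified

theorem exists_isSum (h : S.IsStratified x Ξ s L C) (hS : S.Gluing) (J : Set ℤ) :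
    ∃ y, S.IsSum x (cosetSlab Ξ s L J) y :=
  CalibratedSystem.exists_isSum hS (h.separated.mono (cosetSlab_mono le_rfl J.subset_univ))

theorem exists_agreeOn (h : S.IsStratified x Ξ s L C) {B : Set G} (hB : B.Finite) :
    ∃ k : ℕ, ∀ J J' y y', S.IsSum x (cosetSlab Ξ s L J) y → S.IsSum x (cosetSlab Ξ s L J') y' →
      (∀ i : ℤ, |i| ≤ k → (i ∈ J ↔ i ∈ J')) → S.AgreeOn B y y' := by
  obtain ⟨k, hk⟩ := h.freelyNormalizes.exists_abs_le h.finite_translations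
    ((finite_hull h.finite_supp).inv.mul hB)
  refine ⟨k, fun J J' y y' hy hy' hJ => hy.agreeOn hy' fun g hg => ?_⟩
  rw [mem_cosetSlab_iff_exists_singleton, mem_cosetSlab_iff_exists_singleton]
  exact exists_congr fun i => and_congr_left fun hgi => hJ i (hk i g hg hgi)

theorem cutsCleanly (h : S.IsStratified x Ξ s L C) {R : ℕ}
    (hR : ∀ i j g, g ∈ cosetSlab (S.Q ^ 4 * C) s L {i} → g ∈ cosetSlab C s L {j} → |i - j| ≤ R)
    (hw : S.IsSum x (cosetSlab Ξ s L J) w) {p : ℤ} {n : ℕ}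
    (hgap : Disjoint (cosetSlab C s L {j | |(|j| - p)| ≤ R}) (S.supp (S.f^[n] w))) :
    S.CutsCleanly (S.Q ^ 2 * cosetSlab C s L (Set.Ioo (-p) p)) (S.f^[n] w) := by
  intro g hg
  obtain ⟨j, -, hgj⟩ := mem_cosetSlab_iff_exists_singleton.1 (h.supp_iterate_subset J w n hw hg)
  have hj : ¬ |(|j| - p)| ≤ R := fun hj =>
    Set.disjoint_left.1 hgap (mem_cosetSlab_iff_exists_singleton.2 ⟨j, hj, hgj⟩) hg
  by_cases hjp : |j| < p
  · exact Or.inl fun u hu => Set.mul_mem_mul hu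
      (mem_cosetSlab_iff_exists_singleton.2 ⟨j, abs_lt.1 hjp, hgj⟩)
  · refine Or.inr fun u hu => ?_
    rintro ⟨u', hu', g', hg', heq⟩
    obtain ⟨i, hi, hgi⟩ := mem_cosetSlab_iff_exists_singleton.1 hg'
    have hmem : g' ∈ cosetSlab (S.Q ^ 4 * C) s L {j} := by
      rw [← mul_cosetSlab, eq_inv_mul_of_mul_eq heq, ← mul_assoc, pow_add S.Q 2 2]
      exact Set.mul_mem_mul (Set.mul_mem_mul (inv_mem_Q_pow hu') hu) hgj
    have := hR j i g' hmem hgi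
    rw [abs_le] at hj
    rw [Set.mem_Ioo, ← abs_lt] at hi
    have := abs_sub_abs_le_abs_sub j i
    lia

variable [ContinuousConstSMul G X]

theorem exists_isMortal_realizes_splice (h : S.IsStratified x Ξ s L C)
    (hf : S.AsymptoticallyNilpotent) (hS : S.Gluing)
    (hw : S.IsSum x (cosetSlab Ξ s L J) w) {A : Set G} {p : ℤ} {m : ℕ}
    (hA : A = S.Q ^ 2 * cosetSlab C s L (Set.Ioo (-p) p))
    (hclean : ∀ n ≥ m, S.CutsCleanly A (S.f^[n] w)) :
    ∃ d, S.Realizes d (splice A (S.f^[m] w) S.x₀) ∧ S.IsMortal d ∧ S.SuppFiniteMod L d := by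
  have hiter (n : ℕ) :
      S.f^[n] ∘ splice A (S.f^[m] w) S.x₀ = splice A (S.f^[n + m] w) S.x₀ := by
    rw [comp_splice, Function.iterate_add_apply, Function.iterate_fixed S.f_x₀]
  have hglue (n : ℕ) : S.Glueable (splice A (S.f^[n + m] w) S.x₀) :=
    glueable_splice (hclean _ (Nat.le_add_left m n)) (cutsCleanly_x₀ A)
  have hglue₀ : S.Glueable (splice A (S.f^[m] w) S.x₀) := by simpa only [Nat.zero_add] using hglue 0
  obtain ⟨d, hd⟩ := hS _ hglue₀
  have hdsupp (n : ℕ) : S.supp (S.f^[n] d) ⊆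
      S.Q * (S.Q ^ 2 * (C * (fun j : ℤ => s ^ j) '' Set.Ioo (-p) p)) * (L : Set G) := by
    have hdn := hd.iterate n fun i _ => hiter i ▸ hglue i
    rw [hiter] at hdn
    refine hdn.supp_subset_of_splice.trans ?_
    rw [supp_x₀, Set.empty_sdiff, Set.union_empty, mul_assoc, mul_assoc]
    exact Set.mul_subset_mul_left (Set.inter_subset_right.trans hA.subset)
  have hfin : (S.Q * (S.Q ^ 2 * (C * (fun j : ℤ => s ^ j) '' Set.Ioo (-p) p))).Finite :=
    S.finite_Q.mul ((S.finite_Q_pow 2).mul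
      (h.finite_carrier.mul ((Set.finite_Ioo (-p) p).image _)))
  refine ⟨d, hd, isMortal_of_supp_iterate_subset hf (fun l hl => ?_) hfin hdsupp, _, hfin, hdsupp 0⟩
  refine hd.smul_eq_of_splice ?_ (hw.smul_iterate_eq m hl) (S.smul_x₀ l)
  rw [hA, mul_cosetSlab, mul_right_preimage_cosetSlab _ _ hl]

variable [CompactSpace X]

theorem exists_gap (h : S.IsStratified x Ξ s L C) (hf : S.AsymptoticallyNilpotent)
    (hS : S.Gluing) (R : ℕ) :
    ∃ m k : ℕ, ∀ p : ℤ, k < p → ∃ J w, 0 ∈ J ∧ (∀ j ∈ J, j = 0 ∨ p - k ≤ |j|) ∧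
      S.IsSum x (cosetSlab Ξ s L J) w ∧
      ∀ n ≥ m, Disjoint (cosetSlab C s L {j | |(|j| - p)| ≤ R}) (S.supp (S.f^[n] w)) := by
  obtain ⟨w₀, hw₀⟩ := h.exists_isSum hS ∅
  obtain ⟨z, ⟨J₀, hz⟩, B, hB, m, hm⟩ :=
    hf.exists_uniform_on_agreeOn (P := {y | ∃ J, S.IsSum x (cosetSlab Ξ s L J) y}) ⟨w₀, ∅, hw₀⟩
      (h.finite_carrier.mul ((Set.finite_Icc (-R : ℤ) R).image fun j => s ^ j))
  obtain ⟨k, hk⟩ := h.exists_agreeOn hB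
  refine ⟨m, k, fun p hp => ?_⟩
  -- Around `p` and `-p` the set `J` copies the pattern `J₀` of `z`, whose iterates are eventually
  -- small at the origin; hence those of `w` are eventually small around `p` and `-p`.
  let J : Set ℤ := {j | j = 0 ∨ |j - p| ≤ k ∧ j - p ∈ J₀ ∨ |j + p| ≤ k ∧ j + p ∈ J₀}
  obtain ⟨w, hw⟩ := h.exists_isSum hS J
  refine ⟨J, w, Or.inl rfl, fun j hj => ?_, hw, fun n hn => Set.disjoint_left.2 fun g hg hgw => ?_⟩
  · rcases hj with hj | ⟨hj, -⟩ | ⟨hj, -⟩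
    · exact Or.inl hj
    all_goals exact Or.inr (by rw [le_abs]; rw [abs_le] at hj; lia)
  have hgap (p' : ℤ) (hp' : p' = p ∨ p' = -p) :
      Disjoint (cosetSlab C s L {j | |j - p'| ≤ R}) (S.supp (S.f^[n] w)) := by
    have hsw := hw.smul (s ^ p')
    rw [h.freelyNormalizes.mul_zpow_preimage_cosetSlab] at hsw
    refine hw.disjoint_supp_iterate_of_smul (hm _ ⟨_, hsw⟩ (hk _ _ _ _ hsw hz fun i hi => ?_) n hn)
    rw [abs_le] at hi
    simp only [J, Set.mem_preimage, Set.mem_ofPred_eq, abs_le]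
    rcases hp' with rfl | rfl <;> simp only [add_sub_cancel_right, neg_add_cancel_right] <;> lia
  obtain ⟨j, hj, hgj⟩ := mem_cosetSlab_iff_exists_singleton.1 hg
  rcases abs_choice j with habs | habs <;> rw [Set.mem_ofPred_eq, habs] at hj
  · exact Set.disjoint_left.1 (hgap p (Or.inl rfl))
      (mem_cosetSlab_iff_exists_singleton.2 ⟨j, hj, hgj⟩) hgw
  · refine Set.disjoint_left.1 (hgap (-p) (Or.inr rfl))
      (mem_cosetSlab_iff_exists_singleton.2 ⟨j, ?_, hgj⟩) hgw
    rwa [Set.mem_ofPred_eq, sub_neg_eq_add, ← abs_neg, neg_add']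

theorem exists_mortal_truncation (h : S.IsStratified x Ξ s L C)
    (hf : S.AsymptoticallyNilpotent) (hS : S.Gluing) (hy : S.IsSum x (cosetSlab Ξ s L {0}) y) :
    ∃ m : ℕ, ∀ B : Set G, B.Finite → ∀ r : ℤ, ∃ d, S.IsMortal d ∧ S.SuppFiniteMod L d ∧
      S.AgreeOn B d (S.f^[m] y) ∧
      S.supp d ⊆ cosetSlab (S.Q ^ (m + 1) * S.hull x * Ξ) s L {j | j = 0 ∨ r ≤ |j|} := by
  obtain ⟨R, hR⟩ := h.freelyNormalizes.exists_abs_sub_le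
    ((S.finite_Q_pow 4).mul h.finite_carrier) h.finite_carrier
  obtain ⟨m, k, hgap⟩ := h.exists_gap hf hS R
  refine ⟨m, fun B hB r => ?_⟩
  obtain ⟨k₁, hk₁⟩ := h.exists_agreeOn ((S.finite_Q_pow m).mul (S.finite_Q.mul hB))
  obtain ⟨k₂, hk₂⟩ := h.freelyNormalizes.exists_abs_le h.finite_carrier hB
  obtain ⟨p, hp₁, hp₂, hpr⟩ : ∃ p : ℤ, k + k₁ < p ∧ k₂ < p ∧ k + r ≤ p :=
    ⟨max (k + k₁ + 1) (max (k₂ + 1) (k + r)), by lia, by lia, by lia⟩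
  obtain ⟨J, w, hJ₀, hJ, hw, hwgap⟩ := hgap p (by lia)
  obtain ⟨d, hd, hmortal, hfin⟩ := h.exists_isMortal_realizes_splice hf hS hw rfl
    fun n hn => h.cutsCleanly hR hw (hwgap n hn)
  refine ⟨d, hmortal, hfin, fun g hg => ?_, ?_⟩
  · have hwy : S.AgreeOn (S.Q * B) (S.f^[m] w) (S.f^[m] y) := by
      refine AgreeOn.iterate m (hk₁ _ _ _ _ hw hy fun i hi => ⟨fun hiJ => ?_, ?_⟩)
      · exact (hJ i hiJ).resolve_right (by lia)
      · rintro rfl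
        exact hJ₀
    have hdg := hd g
    by_cases hgA : g ∈ S.Q ^ 2 * cosetSlab C s L (Set.Ioo (-p) p)
    · rw [splice_apply_of_mem hgA] at hdg
      linarith [hwy.dist_le hg, dist_triangle (g • d) (g • S.f^[m] w) (g • S.f^[m] y), S.ε_pos]
    · rw [splice_apply_of_notMem hgA, S.smul_x₀] at hdg
      have hgy : g ∉ S.supp (S.f^[m] y) := fun hgy => hgA <| subset_Q_pow_mul 2 _ <| by
        obtain ⟨i, -, hgi⟩ :=
          mem_cosetSlab_iff_exists_singleton.1 (h.supp_iterate_subset _ _ m hy hgy)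
        refine mem_cosetSlab_iff_exists_singleton.2 ⟨i, abs_lt.1 ?_, hgi⟩
        linarith [hk₂ i g hg hgi]
      linarith [notMem_supp.1 hgy, dist_triangle_right (g • d) (g • S.f^[m] y) S.x₀, S.ε_pos]
  · refine hd.supp_subset_of_splice.trans ?_
    rw [supp_x₀, Set.empty_sdiff, Set.union_empty]
    refine (Set.mul_subset_mul_left
      (Set.inter_subset_left.trans (hw.supp_iterate_subset m))).trans ?_
    rw [mul_cosetSlab, mul_cosetSlab, pow_succ']
    simp only [mul_assoc]
    exact cosetSlab_mono le_rfl fun j hj => (hJ j hj).imp_right (by lia)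

theorem isMortal (h : S.IsStratified x Ξ s L C) (hf : S.AsymptoticallyNilpotent)
    (hS : S.Gluing) (hy : S.IsSum x (cosetSlab Ξ s L {0}) y) : S.IsMortal y := by
  obtain ⟨m, hm⟩ := h.exists_mortal_truncation hf hS hy
  obtain ⟨D, hD, N, hDN⟩ := hf.exists_uniform_of_disjoint hS L h.finite_carrier
  obtain ⟨k, hk⟩ := h.freelyNormalizes.exists_abs_sub_le hD
    (((S.finite_Q_pow (m + 1)).mul (finite_hull h.finite_supp)).mul h.finite_translations)
  have hfar {j : ℤ} (hj : k < |j|) {n : ℕ} (hn : N ≤ n) {c : G} (hc : c ∈ C) :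
      c * s ^ j ∉ S.supp (S.f^[n] (S.f^[m] y)) := by
    refine notMem_supp_iterate_of_forall_finite_agreeOn fun B hB => ?_
    obtain ⟨d, hd, hdL, hdy, hdsupp⟩ := hm B hB (|j| + k + 1)
    refine ⟨d, hdy, ?_⟩
    rw [← mem_supp_smul, ← iterate_smul]
    have hdL' := hdL.smul (zpow_mem h.freelyNormalizes.mem_normalizer j)
    refine Set.disjoint_left.1 (hDN _ (hd.smul _) hdL' ?_ n hn) hc
    refine Set.disjoint_left.2 fun g hgD hgd => ?_
    obtain ⟨i, hi, hgi⟩ := mem_cosetSlab_iff_exists_singleton.1 (hdsupp (mem_supp_smul.1 hgd))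
    have hgj : g * s ^ j ∈ cosetSlab D s L {j} := by
      rw [← cosetSlab_zero (s := s)] at hgD
      rw [← Set.mem_preimage (f := (· * s ^ j)), h.freelyNormalizes.mul_zpow_preimage_cosetSlab]
      exact cosetSlab_mono le_rfl (by simp) hgD
    have hji := hk j i _ hgj hgi
    rcases hi with rfl | hi
    · rw [sub_zero] at hji
      exact hj.not_ge hji
    · have := abs_sub_abs_le_abs_sub i j
      rw [abs_sub_comm] at this
      lia
  rw [← isMortal_iterate_iff (m := N + m)]
  refine isMortal_of_supp_iterate_subset hf (fun l hl => hy.smul_iterate_eq _ hl)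
    (h.finite_carrier.mul ((Set.finite_Icc (-k : ℤ) k).image fun j => s ^ j)) fun n g hg => ?_
  rw [← Function.iterate_add_apply, ← add_assoc] at hg
  obtain ⟨c, hc, j, -, l, hl, rfl⟩ := mem_cosetSlab.1 (h.supp_iterate_subset _ _ _ hy hg)
  refine mem_cosetSlab.2 ⟨c, hc, j, abs_le.1 (not_lt.1 fun hj => ?_), l, hl, rfl⟩
  rw [← mem_supp_smul, hy.smul_iterate_eq _ hl, Function.iterate_add_apply] at hg
  exact hfar hj (Nat.le_add_left N n) hc hg

end IsStratified

end Stratified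

section Confined

variable {x y : X} {Ξ : Set G} {K K₁ : Subgroup G} {t : G}

variable (S) in
/-- The supports of the iterates of all sums of translates of `x` over separated subsets of `K` lie
in a common finite union of left cosets of `K`. -/
def Confined (x : X) (K : Subgroup G) : Prop :=
  ∃ F : Set G, F.Finite ∧ ∀ Ξ ⊆ (K : Set G), Separated (S.hull x) Ξ → ∀ y, S.IsSum x Ξ y →
    ∀ n, S.supp (S.f^[n] y) ⊆ F * K

theorem Confined.of_relIndex_ne_zero (h : S.Confined x K) (hle : K₁ ≤ K)
    (hindex : K₁.relIndex K ≠ 0) : S.Confined x K₁ := by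
  obtain ⟨F, hF, h⟩ := h
  obtain ⟨R, hR, hKR⟩ := relIndex_ne_zero_iff_exists_finite_subset_mul.1 hindex
  refine ⟨F * R, hF.mul hR, fun Ξ hΞ hsep y hy n => (h Ξ (hΞ.trans hle) hsep y hy n).trans ?_⟩
  rw [mul_assoc]
  exact Set.mul_subset_mul_left hKR

theorem Confined.exists_fg (h : S.Confined x K) (hx : (S.supp x).Finite) :
    ∃ N : Subgroup G, N.FG ∧ N ≤ K ∧ ∀ M, N ≤ M → M ≤ K → S.Confined x M := by
  obtain ⟨F, hF, h⟩ := h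
  -- If an iterate has its support in `E * M`, that of the next one lies in `S.Q * E * M` and in
  -- `F * K`. These meet inside `E * M` as soon as `M` contains `E⁻¹ * S.Q * E ∩ K`.
  let E := F ∪ S.hull x
  have hE : E.Finite := hF.union (finite_hull hx)
  refine ⟨Subgroup.closure (E⁻¹ * S.Q * E ∩ K), (Subgroup.fg_iff _).2 ⟨_, rfl,
    ((hE.inv.mul S.finite_Q).mul hE).subset Set.inter_subset_left⟩,
    (Subgroup.closure_le K).2 Set.inter_subset_right,
    fun M hNM hMK => ⟨E, hE, fun Ξ hΞ hsep y hy n => ?_⟩⟩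
  induction n with
  | zero => exact hy.supp_subset.trans (Set.mul_subset_mul Set.subset_union_right hΞ)
  | succ n ih =>
    intro g hg
    obtain ⟨c, hc, k, hk, rfl⟩ := h Ξ (hΞ.trans hMK) hsep y hy (n + 1) hg
    rw [Function.iterate_succ_apply'] at hg
    obtain ⟨q, hq, hqg⟩ := exists_mem_supp_of_mem_supp_f hg
    obtain ⟨c', hc', m, hm, heq⟩ := ih hqg
    have hkm : c⁻¹ * q⁻¹ * c' = k * m⁻¹ := by
      rw [eq_mul_inv_iff_mul_eq, mul_assoc, show c' * m = q * (c * k) from heq]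
      group
    have hmem : c⁻¹ * q⁻¹ * c' ∈ M := hNM <| Subgroup.subset_closure
      ⟨Set.mul_mem_mul (Set.mul_mem_mul (Set.inv_mem_inv.2 (Or.inl hc)) (inv_mem_Q hq)) hc',
        hkm ▸ mul_mem hk (inv_mem (hMK hm))⟩
    exact ⟨c, Or.inl hc, k, by simpa [hkm] using mul_mem hmem hm, rfl⟩

variable [CompactSpace X] [ContinuousConstSMul G X]

theorem Confined.of_finite (hS : S.Gluing) (hx : (S.supp x).Finite) {F : Set G} (hF : F.Finite)
    (h : ∀ Ξ ⊆ (K : Set G), Ξ.Finite → Separated (S.hull x) Ξ → ∀ y, S.IsSum x Ξ y →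
      ∀ n, S.supp (S.f^[n] y) ⊆ F * K) : S.Confined x K := by
  refine ⟨F, hF, fun Ξ hΞ hsep y hy n g hg => ?_⟩
  by_contra hgF
  refine notMem_supp_iterate_of_forall_finite_agreeOn (fun B hB => ?_) hg
  obtain ⟨Ξ', hΞ', hfin, y', hy', hagree⟩ := hy.exists_finite_agreeOn hS hx hsep hB
  exact ⟨y', hagree, fun hg => hgF (h Ξ' (hΞ'.trans hΞ) hfin (hsep.mono hΞ') y' hy' n hg)⟩

theorem Confined.exists_isMortal_isSum (h : S.Confined x (Subgroup.zpowers t ⊔ K₁))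
    (ht : FreelyNormalizes t K₁) (hK : ResiduallyFiniteIn (Subgroup.zpowers t ⊔ K₁))
    (hf : S.AsymptoticallyNilpotent) (hS : S.Gluing) (hx : (S.supp x).Finite)
    (hΞ : Ξ ⊆ (↑(Subgroup.zpowers t ⊔ K₁) : Set G)) (hΞfin : Ξ.Finite)
    (hsep : Separated (S.hull x) Ξ) {A : Set G} (hA : A.Finite) :
    ∃ L ≤ K₁, (∀ a ∈ A, a ∈ L → a = 1) ∧ ∃ y, S.IsSum x (Ξ * L) y ∧ S.IsMortal y := by
  obtain ⟨F, hF, h⟩ := h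
  have hV := (finite_hull hx).mul hΞfin
  obtain ⟨N, hnorm, hindex, hN⟩ := hK _ (hA.union (hV.inv.mul hV))
  obtain ⟨s, hsN, hst, hs, R, hR, hKR⟩ := ht.exists_freelyNormalizes_inf hnorm hindex
  have hsepN : Separated (S.hull x) (Ξ * N) :=
    hsep.mul_subgroup fun a ha => hN a (Or.inr ha)
  have hslabN (J : Set ℤ) : cosetSlab Ξ s (K₁ ⊓ N) J ⊆ Ξ * N := fun g hg => by
    obtain ⟨ξ, hξ, j, -, l, hl, rfl⟩ := mem_cosetSlab.1 hg
    exact ⟨ξ, hξ, s ^ j * l, mul_mem (zpow_mem hsN j) hl.2, (mul_assoc _ _ _).symm⟩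
  have hslabK (J : Set ℤ) :
      cosetSlab Ξ s (K₁ ⊓ N) J ⊆ (↑(Subgroup.zpowers t ⊔ K₁) : Set G) := fun g hg => by
    obtain ⟨ξ, hξ, j, -, l, hl, rfl⟩ := mem_cosetSlab.1 hg
    exact mul_mem (mul_mem (hΞ hξ) (zpow_mem (Subgroup.mem_sup_left hst) j))
      (Subgroup.mem_sup_right hl.1)
  have hstrat : S.IsStratified x Ξ s (K₁ ⊓ N) (F * R) :=
    { freelyNormalizes := hs
      finite_supp := hx
      finite_translations := hΞfin
      finite_carrier := hF.mul hR
      separated := hsepN.mono (hslabN _)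
      supp_iterate_subset := fun J y n hy => by
        rw [← mul_cosetSlab]
        exact (h _ (hslabK J) (hsepN.mono (hslabN J)) y hy n).trans (Set.mul_subset_mul_left hKR) }
  obtain ⟨y, hy⟩ := hstrat.exists_isSum hS {0}
  refine ⟨K₁ ⊓ N, inf_le_left, fun a ha haN => hN a (Or.inl ha) haN.2, y, ?_,
    hstrat.isMortal hf hS hy⟩
  rwa [cosetSlab_zero] at hy

theorem Confined.exists_uniform_of_disjoint (h : S.Confined x (Subgroup.zpowers t ⊔ K₁))
    (ht : FreelyNormalizes t K₁) (hK : ResiduallyFiniteIn (Subgroup.zpowers t ⊔ K₁))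
    (hf : S.AsymptoticallyNilpotent) (hS : S.Gluing) (hx : (S.supp x).Finite)
    {W : Set G} (hW : W.Finite) :
    ∃ D : Set G, D.Finite ∧ ∃ N : ℕ, ∀ Ξ ⊆ (↑(Subgroup.zpowers t ⊔ K₁) : Set G), Ξ.Finite →
      Separated (S.hull x) Ξ → Disjoint (D * K₁) (S.hull x * Ξ) → ∀ y, S.IsSum x Ξ y →
      ∀ n ≥ N, Disjoint W (S.supp (S.f^[n] y)) := by
  obtain ⟨D, hD, N, hDN⟩ := hf.exists_uniform_of_disjoint hS K₁ hW
  refine ⟨D, hD, N, fun Ξ hΞ hfin hsep hdisj y hy n hn => Set.disjoint_left.2 fun c hc => ?_⟩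
  refine notMem_supp_iterate_of_forall_finite_agreeOn fun B hB => ?_
  obtain ⟨L, hL, hLA, y', hy', hmortal⟩ := h.exists_isMortal_isSum ht hK hf hS hx hΞ hfin hsep
    (hfin.inv.mul ((finite_hull hx).inv.mul hB))
  have hsupp : S.supp y' ⊆ S.hull x * Ξ * L := mul_assoc (S.hull x) Ξ L ▸ hy'.supp_subset
  refine ⟨y', hy'.agreeOn hy fun g hg => ⟨?_, fun hgΞ => ⟨g, hgΞ, 1, one_mem L, mul_one g⟩⟩,
    Set.disjoint_left.1 (hDN y' hmortal ⟨_, (finite_hull hx).mul hfin,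
      hsupp.trans (Set.mul_subset_mul_left hL)⟩ ?_ n hn) hc⟩
  · rintro ⟨ξ, hξ, l, hl, rfl⟩
    have := hLA l ⟨ξ⁻¹, Set.inv_mem_inv.2 hξ, _, hg, inv_mul_cancel_left ξ l⟩ hl
    simpa [this] using hξ
  · refine Set.disjoint_left.2 ?_
    rintro _ ⟨d, hd, k, hk, rfl⟩ hg
    obtain ⟨v, hv, l, hl, heq⟩ := hsupp hg
    refine Set.disjoint_left.1 hdisj ⟨d, hd, k * l⁻¹, mul_mem hk (inv_mem (hL hl)), ?_⟩ hv
    rw [eq_mul_inv_of_mul_eq heq, mul_assoc]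

theorem Confined.of_freelyNormalizes (h : S.Confined x (Subgroup.zpowers t ⊔ K₁))
    (ht : FreelyNormalizes t K₁) (hK : ResiduallyFiniteIn (Subgroup.zpowers t ⊔ K₁))
    (hf : S.AsymptoticallyNilpotent) (hS : S.Gluing) (hx : (S.supp x).Finite) :
    S.Confined x K₁ := by
  obtain ⟨F, hF, hFK⟩ := id h
  obtain ⟨D, hD, N, hDN⟩ := h.exists_uniform_of_disjoint ht hK hf hS hx hF
  have hle : K₁ ≤ Subgroup.zpowers t ⊔ K₁ := le_sup_right
  have hnormal : Subgroup.zpowers t ⊔ K₁ ≤ Subgroup.normalizer (K₁ : Set G) :=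
    sup_le (Subgroup.zpowers_le.2 ht.mem_normalizer) Subgroup.le_normalizer
  refine .of_finite hS hx (F := S.Q ^ N * S.hull x ∪ F * (D⁻¹ * S.hull x))
    (((S.finite_Q_pow N).mul (finite_hull hx)).union (hF.mul (hD.inv.mul (finite_hull hx))))
    fun Ξ hΞ hfin hsep y hy n g hg => ?_
  rcases lt_or_ge n N with hn | hn
  · refine Set.mul_subset_mul ?_ hΞ (hy.supp_iterate_subset n hg)
    exact (Set.mul_subset_mul_right (Q_pow_mono hn.le)).trans Set.subset_union_left
  obtain ⟨c, hc, k, hk, rfl⟩ := hFK Ξ (hΞ.trans hle) hsep y hy n hg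
  have hmeet : ¬ Disjoint (D * K₁) (S.hull x * ((· * k) ⁻¹' Ξ)) := fun hdisj => by
    refine Set.disjoint_left.1 (hDN _ (fun ξ hξ => ?_) (hfin.preimage (mul_left_injective k).injOn)
      (hsep.preimage_mul_right k) hdisj _ (hy.smul k) n hn) hc ?_
    · simpa using mul_mem (hle (hΞ hξ)) (inv_mem hk)
    · rwa [iterate_smul, mem_supp_smul]
  obtain ⟨_, ⟨d, hd, l, hl, rfl⟩, v, hv, ξ, hξ, heq⟩ := Set.not_disjoint_iff.1 hmeet
  have hdv : d⁻¹ * v = l * k * (ξ * k)⁻¹ := by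
    rw [eq_mul_inv_iff_mul_eq, ← mul_assoc, mul_assoc d⁻¹, show v * ξ = d * l from heq]
    group
  have hdvK : d⁻¹ * v ∈ Subgroup.normalizer (K₁ : Set G) :=
    hnormal (hdv ▸ mul_mem (mul_mem (hle hl) hk) (inv_mem (hle (hΞ hξ))))
  refine ⟨c * (d⁻¹ * v), Or.inr (Set.mul_mem_mul hc (Set.mul_mem_mul (Set.inv_mem_inv.2 hd) hv)),
    (d⁻¹ * v)⁻¹ * l⁻¹ * (d⁻¹ * v)⁻¹⁻¹ * (ξ * k), mul_mem
      ((Subgroup.mem_normalizer_iff.1 (inv_mem hdvK) _).1 (inv_mem hl)) (hΞ hξ), ?_⟩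
  simp only [inv_inv]
  rw [hdv]
  group

theorem isDescending_confined (hf : S.AsymptoticallyNilpotent) (hS : S.Gluing)
    (hx : (S.supp x).Finite) :
    IsDescending fun K : Subgroup G => ResiduallyFiniteIn K ∧ S.Confined x K where
  exists_fg := by
    rintro K ⟨hK, h⟩
    obtain ⟨N, hN, hNK, hNM⟩ := h.exists_fg hx
    exact ⟨N, hN, hNK, fun M hM hMK => ⟨hK.mono hMK, hNM M hM hMK⟩⟩
  of_relIndex_ne_zero h hle hindex := ⟨h.1.mono hle, h.2.of_relIndex_ne_zero hle hindex⟩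
  of_freelyNormalizes ht h := ⟨h.1.mono le_sup_right, h.2.of_freelyNormalizes ht h.1 hf hS hx⟩

end Confined

section Nilpotent

variable [ContinuousConstSMul G X]

theorem exists_mem_agreeOn_of_dense {P : Set X} (hP : Dense P) (z : X) {B : Set G}
    (hB : B.Finite) : ∃ y ∈ P, S.AgreeOn B y z := by
  have hopen : IsOpen {y : X | ∀ g ∈ B, dist (g • y) (g • z) < S.ε} := by
    simp only [Set.ofPred_forall]
    exact hB.isOpen_biInter fun g _ =>
      isOpen_lt ((continuous_const_smul g).dist continuous_const) continuous_const
  obtain ⟨y, hyP, hy⟩ := hP.exists_mem_open hopen ⟨z, fun g _ => by simpa using S.ε_pos⟩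
  exact ⟨y, hyP, fun g hg => by linarith [hy g hg, S.ε_pos]⟩

variable [CompactSpace X]

theorem AsymptoticallyNilpotent.exists_forall_exists_le_disjoint_supp
    (hf : S.AsymptoticallyNilpotent) {W : Set G} (hW : W.Finite) :
    ∃ M, ∀ x, ∃ m ≤ M, Disjoint W (S.supp (S.f^[m] x)) := by
  let U (m : ℕ) : Set X := {x | ∀ c ∈ W, dist (c • S.f^[m] x) S.x₀ < S.ε}
  have hU (m : ℕ) : IsOpen (U m) := by
    simp only [U, Set.ofPred_forall]
    exact hW.isOpen_biInter fun c _ => isOpen_lt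
      (((S.continuous_f.iterate m).const_smul c).dist continuous_const) continuous_const
  obtain ⟨t, ht⟩ := isCompact_univ.elim_finite_subcover U hU fun x _ =>
    Set.mem_iUnion.2 (hf.eventually_dist_smul_iterate_lt x hW).exists
  refine ⟨t.sup id, fun x => ?_⟩
  obtain ⟨m, hm, hx⟩ := Set.mem_iUnion₂.1 (ht (Set.mem_univ x))
  exact ⟨m, Finset.le_sup (f := id) hm,
    Set.disjoint_left.2 fun c hc => notMem_supp.2 (hx c hc).le⟩

theorem AsymptoticallyNilpotent.exists_uniform_of_dense (hf : S.AsymptoticallyNilpotent)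
    (hS : S.Gluing) (hdense : Dense {y | S.IsMortal y ∧ (S.supp y).Finite}) :
    ∃ W : Set G, W.Finite ∧ ∃ N : ℕ, ∀ z, Disjoint W (S.supp z) →
      ∀ n ≥ N, 1 ∉ S.supp (S.f^[n] z) := by
  obtain ⟨D, hD, N, hDN⟩ := hf.exists_uniform_of_disjoint hS ⊥ (Set.finite_singleton 1)
  have hQD := S.finite_Q.mul hD
  refine ⟨S.Q * D, hQD, N, fun z hz n hn => ?_⟩
  refine notMem_supp_iterate_of_forall_finite_agreeOn fun B hB => ?_
  obtain ⟨y, ⟨hmortal, hfin⟩, hyz⟩ :=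
    exists_mem_agreeOn_of_dense hdense z (hB.union (S.finite_Q.mul hQD))
  refine ⟨y, hyz.mono Set.subset_union_left, Set.disjoint_left.1
    (hDN y hmortal ⟨S.supp y, hfin, by simp⟩ (Set.disjoint_left.2 fun d hd => ?_) n hn) rfl⟩
  rw [Subgroup.coe_bot, Set.singleton_one, mul_one] at hd
  refine notMem_supp.2 ((S.dist_le (d • y) S.x₀ fun q hq => ?_).trans (half_le_self S.ε_pos.le))
  have hqd : q * d ∈ S.Q * D := Set.mul_mem_mul hq hd
  have h₁ := (hyz.mono Set.subset_union_right).dist_le hqd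
  have h₂ := notMem_supp.1 (Set.disjoint_left.1 hz hqd)
  rw [← mul_smul, S.smul_x₀]
  linarith [dist_triangle ((q * d) • y) ((q * d) • z) S.x₀, S.ε_pos]

theorem AsymptoticallyNilpotent.exists_iterate_eq_x₀ (hf : S.AsymptoticallyNilpotent)
    (hS : S.Gluing) (hdense : Dense {y | S.IsMortal y ∧ (S.supp y).Finite}) :
    ∃ n, ∀ x, S.f^[n] x = S.x₀ := by
  obtain ⟨W, hW, N, hN⟩ := hf.exists_uniform_of_dense hS hdense
  obtain ⟨M, hM⟩ := hf.exists_forall_exists_le_disjoint_supp hW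
  refine ⟨N + M, fun x => eq_x₀_of_supp_eq_empty (Set.eq_empty_of_forall_notMem fun g => ?_)⟩
  obtain ⟨m, hm, hdisj⟩ := hM (g • x)
  rw [← one_mul g, ← mem_supp_smul, ← iterate_smul,
    show N + M = N + M - m + m by lia, Function.iterate_add_apply]
  exact hN _ hdisj _ (by lia)

end Nilpotent

end CalibratedSystem

end Dynamics

section Main

open scoped Pointwise

variable {G X : Type} [Group G] [MetricSpace X] [MulAction G X]

namespace CalibratedSystem

variable {S : CalibratedSystem G X} {x : X}

theorem finite_supp_of_homoclinic (hx : Homoclinic G S.x₀ x) : (S.supp x).Finite := by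
  obtain ⟨E, hE⟩ := hx S.ε S.ε_pos
  refine E.finite_toSet.subset fun g hg => ?_
  by_contra hgE
  exact lt_asymm hg (hE g hgE)

variable [CompactSpace X] [ContinuousConstSMul G X]

theorem isMortal_of_finite_supp
    (hgroup : ∀ H : Subgroup G, H.FG → ResiduallyFinite H ∧ HasLVASubnormalSeries H)
    (hf : S.AsymptoticallyNilpotent) (hS : S.Gluing) (hx : (S.supp x).Finite) :
    S.IsMortal x := by
  let H := Subgroup.closure (S.Q ∪ S.supp x)
  have hQH (n : ℕ) : S.Q ^ n ⊆ H :=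
    Subgroup.pow_subset (Set.subset_union_left.trans Subgroup.subset_closure)
  have hconf : S.Confined x H := by
    refine ⟨1, Set.finite_one, fun Ξ hΞ _ y hy n g hg => ?_⟩
    obtain ⟨_, ⟨u, hu, _, ⟨v, hv, w, hw, rfl⟩, rfl⟩, ξ, hξ, rfl⟩ := hy.supp_iterate_subset n hg
    rw [one_mul]
    exact mul_mem (mul_mem (hQH n hu)
      (mul_mem (hQH 2 hv) (Subgroup.subset_closure (Or.inr hw)))) (hΞ hξ)
  obtain ⟨hres, hseries⟩ := hgroup H ((Subgroup.fg_iff H).2 ⟨_, rfl, S.finite_Q.union hx⟩)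
  obtain ⟨-, F, hF, hbot⟩ : ResiduallyFiniteIn (⊥ : Subgroup G) ∧ S.Confined x ⊥ := by
    have := ((isDescending_confined hf hS hx).map H.subtype_injective).bot_of_hasLVASubnormalSeries
      hseries
    simp only [← MonoidHom.range_eq_map, Subgroup.range_subtype, Subgroup.map_bot] at this
    exact this ⟨hres.residuallyFiniteIn, hconf⟩
  refine isMortal_of_supp_iterate_subset hf (fun l hl => ?_) hF
    (hbot {1} (by simp) (by simp [Separated]) x (S.isSum_singleton_one x))
  rw [Subgroup.mem_bot.1 hl, one_smul]

end CalibratedSystem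

theorem exists_symmetric_finite_dist_lt_of_expansive [CompactSpace X] [ContinuousConstSMul G X]
    {Δ : ℝ} (hexp : ∀ x y : X, (∀ g : G, dist (g • x) (g • y) ≤ Δ) → x = y) (E : Finset G)
    {η : ℝ} (hη : 0 < η) :
    ∃ Q : Set G, Q.Finite ∧ 1 ∈ Q ∧ Q⁻¹ = Q ∧ ↑E ⊆ Q ∧
      ∀ x y : X, (∀ q ∈ Q, dist (q • x) (q • y) ≤ Δ) → dist x y < η := by
  obtain ⟨B, hB, hdist⟩ := exists_finite_dist_lt_of_expansive hexp hη
  have hfin : ({1} ∪ ↑E ∪ B : Set G).Finite :=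
    ((Set.finite_singleton 1).union E.finite_toSet).union hB
  refine ⟨({1} ∪ ↑E ∪ B) ∪ ({1} ∪ ↑E ∪ B)⁻¹, hfin.union hfin.inv, by simp, ?_,
    fun e he => Or.inl (Or.inl (Or.inr he)),
    fun x y h => hdist x y fun g hg => h g (Or.inl (Or.inr hg))⟩
  rw [Set.union_inv, inv_inv, Set.union_comm]

theorem exists_calibratedSystem [CompactSpace X] [ContinuousConstSMul G X] {x₀ : X}
    (hx₀ : ∀ g : G, g • x₀ = x₀)
    (hexp : ∃ Δ : ℝ, 0 < Δ ∧ ∀ x y : X, (∀ g : G, dist (g • x) (g • y) ≤ Δ) → x = y)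
    (hglue : ZeroGluing G x₀) {f : X → X} (hf : Continuous f) (hf₀ : f x₀ = x₀)
    (hfeq : ∀ (g : G) (x : X), f (g • x) = g • f x) :
    ∃ S : CalibratedSystem G X, S.x₀ = x₀ ∧ S.f = f ∧ S.Gluing := by
  obtain ⟨Δ, hΔ, hexp⟩ := hexp
  obtain ⟨ε, rfl⟩ : ∃ ε, 4 * ε = Δ := ⟨Δ / 4, by ring⟩
  have hε : 0 < ε := by linarith
  obtain ⟨η, hη, hηf⟩ := Metric.uniformContinuous_iff.1
    (CompactSpace.uniformContinuous_of_continuous hf) (ε / 2) (half_pos hε)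
  obtain ⟨δ, hδ, E, hE⟩ := hglue ε hε
  obtain ⟨Q, hQ, hQ1, hQinv, hEQ, hdist⟩ := exists_symmetric_finite_dist_lt_of_expansive hexp E
    (lt_min hη (lt_min (half_pos hε) hδ))
  simp only [lt_min_iff] at hdist
  let S : CalibratedSystem G X :=
    { x₀ := x₀, f := f, ε := ε, Q := Q, ε_pos := hε, smul_x₀ := hx₀, continuous_f := hf
      f_x₀ := hf₀, f_smul := hfeq, expansive := hexp, finite_Q := hQ, one_mem_Q := hQ1
      inv_Q := hQinv, dist_le := fun x y h => (hdist x y h).2.1.le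
      dist_f_le := fun x y h => (hηf (hdist x y h).1).le }
  refine ⟨S, rfl, rfl, fun P hP => ?_⟩
  obtain ⟨y, hy⟩ := hE X (fun x => P ⁻¹' {x}) id (fun g => ⟨P g, rfl, fun _ h => h.symm⟩) <| by
    rintro _ g rfl ⟨e, he, hne⟩
    rcases hP g with hconst | hclose
    · exact absurd (hconst e (hEQ he)) hne
    · refine (hdist (g • P g) x₀ fun q hq => ?_).2.2
      have := CalibratedSystem.notMem_supp.1 (hclose q hq 1 hQ1)
      rw [one_mul, mul_smul] at this
      rw [hx₀]
      exact this.trans (by change ε ≤ 4 * ε; linarith)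
  exact ⟨y, fun g => (hy (P g) g rfl).le⟩

end Main

/-- Main Theorem: Let `G` be a group whose finitely generated subgroups
are residually finite and admit subnormal series with locally virtually abelian
quotients. Let `(G, X, 0)` be an expansive `0`-gluing pointed dynamical system with
dense homoclinic points. Then every asymptotically nilpotent endomorphism of the
system is nilpotent. -/
theorem statement11 {G X : Type} [Group G] [MetricSpace X] [CompactSpace X]
    [MulAction G X]
    (hcont : ∀ g : G, Continuous fun x : X => g • x)
    (x₀ : X) (hx₀ : ∀ g : G, g • x₀ = x₀)
    (hgroup : ∀ H : Subgroup G, H.FG →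
      ResiduallyFinite H ∧ HasLVASubnormalSeries H)
    (hexp : ∃ Δ : ℝ, 0 < Δ ∧
      ∀ x y : X, (∀ g : G, dist (g • x) (g • y) ≤ Δ) → x = y)
    (hglue : ZeroGluing G x₀)
    (hhomo : Dense {x : X | Homoclinic G x₀ x})
    (f : X → X) (hf : Continuous f) (hf₀ : f x₀ = x₀)
    (hfeq : ∀ (g : G) (x : X), f (g • x) = g • f x)
    (hAN : ∀ x : X, Filter.Tendsto (fun n => f^[n] x) Filter.atTop (nhds x₀)) :
    ∃ n : ℕ, ∀ x : X, f^[n] x = x₀ := by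
  have : ContinuousConstSMul G X := ⟨hcont⟩
  obtain ⟨S, rfl, rfl, hS⟩ := exists_calibratedSystem hx₀ hexp hglue hf hf₀ hfeq
  refine CalibratedSystem.AsymptoticallyNilpotent.exists_iterate_eq_x₀ hAN hS
    (hhomo.mono fun x hx => ?_)
  have hfin := CalibratedSystem.finite_supp_of_homoclinic hx
  exact ⟨CalibratedSystem.isMortal_of_finite_supp hgroup hAN hS hfin, hfin⟩
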